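/- Let (A,Λ) be any associative form ring with 1, let n ≥ 4, and let (I_1,Γ_1), …, (I_m,Γ_m) be form ideals of (A,Λ). Consider an arbitrary arrangement of brackets ⟦…⟧ on m factors with cut point s (i.e. the outermost commutator separates the first s factors from the last m−s). Then ⟦EU(2n,I_1,Γ_1), EU(2n,I_2,Γ_2), …, EU(2n,I_m,Γ_m)⟧ = [EU(2n,(I_1,Γ_1)∘…∘(I_s,Γ_s)), EU(2n,(I_{s+1},Γ_{s+1})∘…∘(I_m,Γ_m))], where the bracketing of the symmetrised products on the right hand side coincides with the bracketing of the commutators on the left hand side. -/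

import Mathlib

open Matrix
open scoped commutatorElement

/-- Bak's form ring data on a ring `A`: an involution `bar`, a central symmetry
`λ` with `λ λ̄ = 1`, and a form parameter `Λ`. -/
structure FormRingData (A : Type*) [Ring A] where
  bar : A →+ A
  bar_mul : ∀ a b : A, bar (a * b) = bar b * bar a
  bar_bar : ∀ a : A, bar (bar a) = a
  lam : A
  lam_comm : ∀ a : A, lam * a = a * lam
  lam_bar : lam * bar lam = 1
  Lambda : AddSubgroup A
  lambdaMin_mem : ∀ c : A, c - lam * bar c ∈ Lambda
  lambdaMax_mem : ∀ x ∈ Lambda, x = -(lam * bar x)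
  lambda_conj : ∀ (c : A), ∀ x ∈ Lambda, c * x * bar c ∈ Lambda

namespace FormRingData

variable {A : Type*} [Ring A]

/-- Integral powers of the symmetry `λ`; negative powers use `λ̄ = λ⁻¹`. -/
def lpow (D : FormRingData A) (k : ℤ) : A :=
  if 0 ≤ k then D.lam ^ k.toNat else (D.bar D.lam) ^ (-k).toNat

end FormRingData

/-- The index set `Ω = {1,…,n,−n,…,−1}`, coded as `Fin n × Bool`
(second component `true` = positive index). -/
abbrev Idx (n : ℕ) := Fin n × Bool

namespace Idx

/-- The involution `i ↦ −i` on indices. -/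
def neg {n : ℕ} (i : Idx n) : Idx n := (i.1, !i.2)

/-- The sign `ε(i) ∈ {±1}`. -/
def eps {n : ℕ} (i : Idx n) : ℤ := if i.2 then 1 else -1

theorem neg_ne {n : ℕ} (i : Idx n) : neg i ≠ i := by
  simp [neg, Prod.ext_iff]

theorem neg_injective {n : ℕ} : Function.Injective (neg (n := n)) := by
  intro i j h
  simp only [neg, Prod.mk.injEq] at h
  refine Prod.ext h.1 ?_
  have h2 := h.2
  cases hi : i.2 <;> cases hj : j.2 <;> simp_all

theorem neg_neg {n : ℕ} (i : Idx n) : neg (neg i) = i := by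
  simp [neg]

end Idx

/-- `GL(2n, A)`, realised as the units of the `Ω × Ω` matrix ring over `A`. -/
abbrev GLn (A : Type*) [Ring A] (n : ℕ) := (Matrix (Idx n) (Idx n) A)ˣ

section aux

theorem one_add_mul_one_sub {R : Type*} [Ring R] {X : R} (h : X * X = 0) :
    (1 + X) * (1 - X) = 1 := by
  have hh : (1 + X) * (1 - X) = 1 - X * X := by noncomm_ring
  rw [hh, h, sub_zero]

theorem one_sub_mul_one_add {R : Type*} [Ring R] {X : R} (h : X * X = 0) :
    (1 - X) * (1 + X) = 1 := by
  have hh : (1 - X) * (1 + X) = 1 - X * X := by noncomm_ring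
  rw [hh, h, sub_zero]

theorem stdBasisMatrix_neg' {A : Type*} [Ring A] {n : ℕ} (i j : Idx n) (c : A) :
    Matrix.single i j (-c) = -Matrix.single i j c := by
  refine eq_neg_of_add_eq_zero_left ?_
  rw [← Matrix.single_add]
  simp

end aux

namespace FormRingData

variable {A : Type*} [Ring A] {n : ℕ}

/-- The off-diagonal part of a short root element. -/
def Xmat (D : FormRingData A) (i j : Idx n) (c : A) : Matrix (Idx n) (Idx n) A :=
  Matrix.single i j c -
    Matrix.single (Idx.neg j) (Idx.neg i) (D.lpow ((Idx.eps j - Idx.eps i) / 2) * D.bar c)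

theorem Xmat_mul (D : FormRingData A) {i j : Idx n} (hij : i ≠ j) (c c' : A) :
    D.Xmat i j c * D.Xmat i j c' = 0 := by
  unfold Xmat
  rw [sub_mul, mul_sub, mul_sub,
    Matrix.single_mul_single_of_ne _ _ _ _ (Ne.symm hij),
    Matrix.single_mul_single_of_ne _ _ _ _ (Ne.symm (Idx.neg_ne j)),
    Matrix.single_mul_single_of_ne _ _ _ _ (Idx.neg_ne i),
    Matrix.single_mul_single_of_ne _ _ _ _ (fun h => hij (Idx.neg_injective h))]
  simp

theorem Xmat_neg (D : FormRingData A) (i j : Idx n) (c : A) :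
    D.Xmat i j (-c) = -D.Xmat i j c := by
  unfold Xmat
  rw [map_neg, mul_neg, stdBasisMatrix_neg', stdBasisMatrix_neg']
  abel

/-- The elementary short root unipotent `T_{ij}(c)`, for `i ≠ ±j`
(with junk value `1` when `i = j`). -/
def TS (D : FormRingData A) (i j : Idx n) (c : A) : GLn A n :=
  if h : i = j then 1 else
    { val := 1 + D.Xmat i j c
      inv := 1 + D.Xmat i j (-c)
      val_inv := by
        rw [D.Xmat_neg, ← sub_eq_add_neg]
        exact one_add_mul_one_sub (D.Xmat_mul h c c)
      inv_val := by
        rw [D.Xmat_neg, ← sub_eq_add_neg]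
        exact one_sub_mul_one_add (D.Xmat_mul h c c) }

/-- The elementary long root unipotent `T_{i,−i}(c)`. -/
def TL (D : FormRingData A) (i : Idx n) (c : A) : GLn A n where
  val := 1 + Matrix.single i (Idx.neg i) c
  inv := 1 + Matrix.single i (Idx.neg i) (-c)
  val_inv := by
    rw [stdBasisMatrix_neg', ← sub_eq_add_neg]
    exact one_add_mul_one_sub (Matrix.single_mul_single_of_ne _ _ _ _ (Idx.neg_ne i) _)
  inv_val := by
    rw [stdBasisMatrix_neg', ← sub_eq_add_neg]
    exact one_sub_mul_one_add (Matrix.single_mul_single_of_ne _ _ _ _ (Idx.neg_ne i) _)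

/-- The elementary unitary transvection `T_{ij}(c)` (long or short root type
according to whether `j = −i`). -/
def T (D : FormRingData A) (i j : Idx n) (c : A) : GLn A n :=
  if j = Idx.neg i then D.TL i c else D.TS i j c

/-- The elementary commutator `Y_{ij}(a,b) = [T_{ij}(a), T_{ji}(b)]`. -/
def Y (D : FormRingData A) (i j : Idx n) (a b : A) : GLn A n :=
  ⁅D.T i j a, D.T j i b⁆

/-- The elementary conjugate `Z_{ij}(a,c) = T_{ji}(c) T_{ij}(a) T_{ji}(−c)`. -/
def Z (D : FormRingData A) (i j : Idx n) (a c : A) : GLn A n :=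
  D.T j i c * D.T i j a * D.T j i (-c)

/-- The set of elementary unitary transvections of level `(I,Γ)`. -/
def transvGen (D : FormRingData A) (n : ℕ) (I Γ : AddSubgroup A) : Set (GLn A n) :=
  {x | ∃ i j : Idx n, i ≠ j ∧ i ≠ Idx.neg j ∧ ∃ c ∈ I, x = D.TS i j c} ∪
    {x | ∃ i : Idx n, ∃ g ∈ Γ, x = D.TL i (D.lpow (-(Idx.eps i + 1) / 2) * g)}

/-- The unrelative elementary subgroup `FU(2n, I, Γ)`. -/
def FU (D : FormRingData A) (n : ℕ) (I Γ : AddSubgroup A) : Subgroup (GLn A n) :=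
  Subgroup.closure (D.transvGen n I Γ)

/-- The absolute elementary unitary group `EU(2n, A, Λ)`. -/
def EUmax (D : FormRingData A) (n : ℕ) : Subgroup (GLn A n) :=
  D.FU n ⊤ D.Lambda

/-- The relative elementary subgroup `EU(2n, I, Γ)`: the normal closure of
`FU(2n, I, Γ)` in `EU(2n, A, Λ)`. -/
def EU (D : FormRingData A) (n : ℕ) (I Γ : AddSubgroup A) : Subgroup (GLn A n) :=
  Subgroup.closure {x | ∃ g ∈ D.EUmax n, ∃ t ∈ D.transvGen n I Γ, x = g * t * g⁻¹}

/-- The additive subgroup generated by products `st`, `s ∈ S`, `t ∈ T`. -/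
def mulSub (S T : AddSubgroup A) : AddSubgroup A :=
  AddSubgroup.closure {x | ∃ a ∈ S, ∃ b ∈ T, x = a * b}

/-- The symmetrised product `ST + TS` of two (additive subgroups underlying)
two-sided ideals. -/
def symI (S T : AddSubgroup A) : AddSubgroup A :=
  mulSub S T ⊔ mulSub T S

/-- The minimal relative form parameter `Γ_min(K)` of level `K`. -/
def gammaMin (D : FormRingData A) (K : AddSubgroup A) : AddSubgroup A :=
  AddSubgroup.closure
    ({x | ∃ a ∈ K, x = a - D.lam * D.bar a} ∪
      {x | ∃ a ∈ K, ∃ c ∈ D.Lambda, x = a * c * D.bar a})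

/-- The relative form parameter `ˢΓ = ⟨ b γ b̄ ∣ b ∈ S, γ ∈ Γ ⟩`. -/
def conjPar (D : FormRingData A) (S Γ : AddSubgroup A) : AddSubgroup A :=
  AddSubgroup.closure {x | ∃ b ∈ S, ∃ g ∈ Γ, x = b * g * D.bar b}

/-- The relative form parameter of the symmetrised product
`(I,Γ)∘(J,Δ) = (IJ+JI, Γ_min(IJ+JI) + ᴶΓ + ᴵΔ)`. -/
def symG (D : FormRingData A) (I Γ J Δ : AddSubgroup A) : AddSubgroup A :=
  D.gammaMin (symI I J) ⊔ D.conjPar J Γ ⊔ D.conjPar I Δ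

/-- The elementary subgroup `EU(2n, (I,Γ)∘(J,Δ))` of the symmetrised product. -/
def EUsym (D : FormRingData A) (n : ℕ) (I Γ J Δ : AddSubgroup A) : Subgroup (GLn A n) :=
  D.EU n (symI I J) (D.symG I Γ J Δ)

/-- Position-dependent membership `a ∈ (I,Γ)` at position `(i,j)`:
`a ∈ I` for a short root position, `a ∈ λ^{−(ε(i)+1)/2}Γ` for a long one. -/
def pmem (D : FormRingData A) (I Γ : AddSubgroup A) {n : ℕ} (i j : Idx n) (a : A) : Prop :=
  if j = Idx.neg i then ∃ g ∈ Γ, a = D.lpow (-(Idx.eps i + 1) / 2) * g else a ∈ I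

end FormRingData

/-- A form ideal `(I,Γ)` of the form ring `(A,Λ)`. -/
structure FormIdeal {A : Type*} [Ring A] (D : FormRingData A) where
  I : AddSubgroup A
  Gamma : AddSubgroup A
  mul_mem_left : ∀ (c : A), ∀ x ∈ I, c * x ∈ I
  mul_mem_right : ∀ (c : A), ∀ x ∈ I, x * c ∈ I
  bar_mem : ∀ x ∈ I, D.bar x ∈ I
  gammaMin_le : D.gammaMin I ≤ Gamma
  gamma_le_I : Gamma ≤ I
  gamma_le_Lambda : Gamma ≤ D.Lambda
  gamma_conj : ∀ (c : A), ∀ x ∈ Gamma, c * x * D.bar c ∈ Gamma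

/-- An arbitrary arrangement of brackets on a multiple commutator of relative
elementary subgroups: a binary tree whose leaves are form ideals. -/
inductive CommTree {A : Type*} [Ring A] (D : FormRingData A) : Type _ where
  | leaf : FormIdeal D → CommTree D
  | node : CommTree D → CommTree D → CommTree D

namespace CommTree

variable {A : Type*} [Ring A] {D : FormRingData A}

/-- The multiple commutator subgroup `⟦EU(2n,I₁,Γ₁),…,EU(2n,I_m,Γ_m)⟧`
determined by the bracketing tree. -/
def grp (n : ℕ) : CommTree D → Subgroup (GLn A n)
  | leaf FI => D.EU n FI.I FI.Gamma
  | node t₁ t₂ => ⁅t₁.grp n, t₂.grp n⁆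

/-- The iterated symmetrised product `(I₁,Γ₁)∘…∘(I_m,Γ_m)` with the same
bracketing. -/
def idl : CommTree D → AddSubgroup A × AddSubgroup A
  | leaf FI => (FI.I, FI.Gamma)
  | node t₁ t₂ =>
      (FormRingData.symI t₁.idl.1 t₂.idl.1,
        D.symG t₁.idl.1 t₁.idl.2 t₂.idl.1 t₂.idl.2)

end CommTree

/-!
The group `EU(2n, A, Λ)` is graded by the roots of type `C_n`, with form ideals as levels. A
relative elementary group is generated by the elementary conjugates `z * x * z⁻¹` with `x` and `z`
at opposite roots. Consequently, modulo the elementary group of the product level, the commutator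
of two relative elementary groups is generated by the commutators `⁅x, y⁆` with `x` and `y` at
opposite roots `α` and `-α`, and these are central. Writing `α` as a sum of two roots moves such
generators to other roots, and for `n ≥ 4` it brings `α` into a position orthogonal to any
prescribed root `β`, where `⁅x, y⁆` commutes with everything at `±β`. Hence `[EU(a), EU(b)]` and
`EU(a ∘ b)` have the same commutator with every relative elementary group and with every commutator
of two of them, and the theorem follows by induction on the bracketing.
-/

section CentralizerMod

variable {G : Type*} [Group G]

theorem commutator_mem_comm {Q : Subgroup G} {x y : G} : ⁅x, y⁆ ∈ Q ↔ ⁅y, x⁆ ∈ Q := by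
  rw [← commutatorElement_inv, inv_mem_iff]

/-- The elements of `G` commuting modulo `Q` with every element of `S`, that is, the preimage of
the centralizer of the image of `S` in `G ⧸ Q`. -/
def centralizerMod (Q : Subgroup G) [Q.Normal] (S : Set G) : Subgroup G :=
  (Subgroup.centralizer (QuotientGroup.mk' Q '' S)).comap (QuotientGroup.mk' Q)

variable {Q : Subgroup G} [Q.Normal]

theorem commutator_mem_iff_commute_quotient {x y : G} :
    ⁅x, y⁆ ∈ Q ↔ Commute (x : G ⧸ Q) (y : G ⧸ Q) := by
  rw [← commutatorElement_eq_one_iff_commute, ← QuotientGroup.eq_one_iff]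
  rfl

theorem mem_centralizerMod {S : Set G} {x : G} :
    x ∈ centralizerMod Q S ↔ ∀ y ∈ S, ⁅x, y⁆ ∈ Q := by
  simp only [centralizerMod, Subgroup.mem_comap, Subgroup.mem_centralizer_iff, Set.forall_mem_image,
    commutator_mem_iff_commute_quotient]
  exact forall₂_congr fun _ _ ↦ eq_comm

theorem mem_centralizerMod_singleton {x y : G} : x ∈ centralizerMod Q {y} ↔ ⁅x, y⁆ ∈ Q := by
  simp [mem_centralizerMod]

theorem le_centralizerMod_iff {H K : Subgroup G} : H ≤ centralizerMod Q K ↔ ⁅H, K⁆ ≤ Q := by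
  simp only [SetLike.le_def, mem_centralizerMod, ← Subgroup.commutator_le, SetLike.mem_coe]

theorem mem_centralizerMod_iff_le {H : Subgroup G} {x : G} :
    x ∈ centralizerMod Q H ↔ H ≤ centralizerMod Q {x} := by
  simp only [mem_centralizerMod, SetLike.le_def, Set.mem_singleton_iff, forall_eq, SetLike.mem_coe]
  exact forall₂_congr fun _ _ ↦ commutator_mem_comm

theorem le_centralizerMod (S : Set G) : Q ≤ centralizerMod Q S :=
  fun x hx ↦ mem_centralizerMod.2 fun y _ ↦ by
    rw [commutatorElement_def, mul_assoc, mul_assoc, ← mul_assoc y]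
    exact mul_mem hx (Subgroup.Normal.conj_mem inferInstance _ (inv_mem hx) y)

instance centralizerMod_normal (N : Subgroup G) [N.Normal] :
    (centralizerMod Q (N : Set G)).Normal := by
  refine ⟨fun x hx g ↦ mem_centralizerMod.2 fun y hy ↦ ?_⟩
  have conj_comm : ⁅x, g⁻¹ * y * g⁻¹⁻¹⁆ ∈ Q :=
    mem_centralizerMod.1 hx _ (Subgroup.Normal.conj_mem inferInstance y hy g⁻¹)
  have h := Subgroup.Normal.conj_mem (inferInstanceAs Q.Normal) _ conj_comm g
  rw [conjugate_commutatorElement] at h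
  simpa [mul_assoc] using h

theorem normal_of_le_centralizerMod_top {M : Subgroup G} (hQM : Q ≤ M)
    (hM : M ≤ centralizerMod Q (⊤ : Subgroup G)) : M.Normal :=
  Subgroup.commutator_top_right_le_iff.1 ((le_centralizerMod_iff.1 hM).trans hQM)

theorem commutator_iSup_le_of_le_normalizer {ι : Type*} {H N : Subgroup G} {K : ι → Subgroup G}
    (hN : ⨆ i, K i ≤ Subgroup.normalizer N) (h : ∀ i, ⁅H, K i⁆ ≤ N) : ⁅H, ⨆ i, K i⁆ ≤ N := by
  refine Subgroup.commutator_le.2 fun x hx y hy ↦ ?_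
  induction hy using Subgroup.iSup_induction' with
  | hp i y hy => exact Subgroup.commutator_le.1 (h i) x hx y hy
  | h1 => simp
  | hmul y z hy _ hxy hxz =>
    rw [commutatorElement_mul_right_eq_mul_conj, mul_assoc, mul_assoc, ← mul_assoc y]
    exact mul_mem hxy (Subgroup.le_normalizer_iff.1 hN y hy _ hxz)

theorem commutator_iSup_le {ι : Type*} {H : Subgroup G} {K : ι → Subgroup G}
    (h : ∀ i, ⁅H, K i⁆ ≤ Q) : ⁅H, ⨆ i, K i⁆ ≤ Q :=
  commutator_iSup_le_of_le_normalizer Subgroup.le_normalizer_of_normal h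

theorem commutatorElement_mul_mul_of_commute {x y u v : G} (hxv : Commute x v)
    (huv : Commute u v) (huy : Commute u y) : ⁅x * u, y * v⁆ = ⁅x, y⁆ := by
  calc ⁅x * u, y * v⁆ = (x * u * (y * v)) * (y * v * (x * u))⁻¹ := by
        simp [commutatorElement_def, mul_assoc]
    _ = (x * y * (v * u)) * (y * x * (v * u))⁻¹ := by
        rw [huy.mul_mul_mul_comm, huv.eq, hxv.symm.mul_mul_mul_comm]
    _ = ⁅x, y⁆ := by simp [commutatorElement_def, mul_assoc]

theorem conj_eq_mul_commutator_inv (y w : G) : w * y * w⁻¹ = y * ⁅y⁻¹, w⁆ := by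
  simp [commutatorElement_def, mul_assoc]

theorem conj_mem_of_mem_closure {S : Set G} {M : Subgroup G} {w x : G}
    (h : ∀ y ∈ S, w * y * w⁻¹ ∈ M) (hx : x ∈ Subgroup.closure S) : w * x * w⁻¹ ∈ M := by
  have hle : Subgroup.closure S ≤ M.comap (MulAut.conj w).toMonoidHom :=
    (Subgroup.closure_le _).2 h
  exact hle hx

theorem conj_mem_of_mem_iSup {ι : Type*} {H : ι → Subgroup G} {M : Subgroup G} {w x : G}
    (h : ∀ i, ∀ y ∈ H i, w * y * w⁻¹ ∈ M) (hx : x ∈ ⨆ i, H i) : w * x * w⁻¹ ∈ M := by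
  rw [Subgroup.iSup_eq_closure] at hx
  exact conj_mem_of_mem_closure (fun y hy ↦ (Set.mem_iUnion.1 hy).elim fun i hi ↦ h i y hi) hx

end CentralizerMod

/-- A family of root subgroups `X a α` of a group `G`. A level `a : F` abstracts a form ideal, a
root `α : Φ` abstracts a position `(i, j)`, and `wt φ α` is the value at `α` of the linear
functional `φ : W`. The relation `IsProduct a b c` says that commutators of level `a` with level
`b` have level `c`. -/
structure RootFamily (G F Φ W : Type*) [Group G] where
  X : F → Φ → Subgroup G
  top : F
  opp : Φ → Φ
  wt : W → Φ → ℤ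
  IsProduct : F → F → F → Prop

namespace RootFamily

variable {G F Φ W : Type*} [Group G] (R : RootFamily G F Φ W)

/-- The unipotent subgroup of level `b` spanned by the roots that are positive for `φ`. -/
def unipotent (φ : W) (b : F) : Subgroup G := ⨆ γ : {γ // 0 < R.wt φ γ}, R.X b γ

/-- The abstract counterpart of `FU(2n, I, Γ)`. -/
def elementary (b : F) : Subgroup G := ⨆ γ, R.X b γ

/-- The abstract counterpart of `EU(2n, I, Γ)`. -/
def relElementary (b : F) : Subgroup G := Subgroup.normalClosure (R.elementary b)

/-- The elementary conjugates `Z_{ij}(x, z)` of level `b`. -/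
def elementaryConj (b : F) : Set G :=
  {y | ∃ α, ∃ x ∈ R.X b α, ∃ z ∈ R.X R.top (R.opp α), z * x * z⁻¹ = y}

/-- Some functional vanishes on `α` and is positive on `β`. -/
def Separated (α β : Φ) : Prop := ∃ φ, R.wt φ α = 0 ∧ 0 < R.wt φ β

/-- The indices `α` and `β` stand for the same root: `(i, j)` and `(-j, -i)` do. -/
def SameRoot (α β : Φ) : Prop := (∀ φ, R.wt φ α = R.wt φ β) ∧ ∀ a, R.X a α = R.X a β

/-- At all levels, the rank one subgroups attached to `±α` and `±β` commute. -/
def Orthogonal (α β : Φ) : Prop :=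
  ∀ a b, R.X a α ⊔ R.X a (R.opp α) ≤
    Subgroup.centralizer (R.X b β ⊔ R.X b (R.opp β) : Subgroup G)

/-- The root `α` is the sum of `γ` and `δ`, and the Chevalley commutator formula for `δ` and `γ`
expresses `X a α` up to a factor at the root `σ`. -/
structure IsDecomposition (α γ δ σ : Φ) : Prop where
  separated_γ : R.Separated α γ
  separated_δ : R.Separated α δ
  separated_σ : R.Separated α σ
  separated_γ_δ : R.Separated γ δ
  separated_δ_γ : R.Separated δ γ
  exists_eq : ∀ a, ∀ x ∈ R.X a α, ∃ d ∈ R.X R.top δ, ∃ g ∈ R.X a γ, ∃ s ∈ R.X a σ, ⁅d, g⁆ * s = x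

/-- The roots obtained from those orthogonal to `β` by repeatedly passing from `γ` and `σ` to a
root with a decomposition along them. -/
inductive Reachable (β : Φ) : Φ → Prop
  | of_orthogonal {α : Φ} : R.Orthogonal α β → Reachable β α
  | of_decomposition {α γ δ σ : Φ} :
      R.IsDecomposition α γ δ σ → Reachable β γ → Reachable β σ → Reachable β α

/-- The groups occurring in a multiple commutator: relative elementary groups of level `c` and
commutators of two such groups for which `c` is the product level. -/
def IsLevelGroup (H : Subgroup G) (c : F) : Prop :=
  H = R.relElementary c ∨ ∃ a b, R.IsProduct a b c ∧
    R.relElementary c ≤ ⁅R.relElementary a, R.relElementary b⁆ ∧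
      H = ⁅R.relElementary a, R.relElementary b⁆

instance (b : F) : (R.relElementary b).Normal := Subgroup.normalClosure_normal

theorem X_le_elementary (b : F) (α : Φ) : R.X b α ≤ R.elementary b := le_iSup (R.X b) α

theorem unipotent_le_elementary (φ : W) (b : F) : R.unipotent φ b ≤ R.elementary b :=
  iSup_le fun γ ↦ R.X_le_elementary b γ

theorem elementary_le_relElementary (b : F) : R.elementary b ≤ R.relElementary b :=
  Subgroup.subset_normalClosure

theorem X_le_relElementary (b : F) (α : Φ) : R.X b α ≤ R.relElementary b :=
  (R.X_le_elementary b α).trans (R.elementary_le_relElementary b)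

theorem relElementary_le_iff {b : F} {N : Subgroup G} [N.Normal] :
    R.relElementary b ≤ N ↔ R.elementary b ≤ N :=
  ⟨(R.elementary_le_relElementary b).trans, Subgroup.normalClosure_le_normal⟩

variable {R}

theorem X_le_unipotent {φ : W} {α : Φ} (b : F) (h : 0 < R.wt φ α) :
    R.X b α ≤ R.unipotent φ b :=
  le_iSup (fun γ : {γ // 0 < R.wt φ γ} ↦ R.X b γ) ⟨α, h⟩

theorem conj_mem_elementaryConj {b : F} {α : Φ} {x z : G} (hx : x ∈ R.X b α)
    (hz : z ∈ R.X R.top (R.opp α)) : z * x * z⁻¹ ∈ R.elementaryConj b :=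
  ⟨α, x, hx, z, hz, rfl⟩

theorem elementary_le_closure_elementaryConj (b : F) :
    R.elementary b ≤ Subgroup.closure (R.elementaryConj b) :=
  iSup_le fun _ _ hx ↦ Subgroup.subset_closure <| by
    simpa using conj_mem_elementaryConj hx (one_mem (R.X R.top _))

theorem Orthogonal.commutator_mem_centralizer {α β : Φ} (h : R.Orthogonal α β) {a b : F} {x y : G}
    (hx : x ∈ R.X a α) (hy : y ∈ R.X b (R.opp α)) (e : F) :
    ⁅x, y⁆ ∈ Subgroup.centralizer (R.X e β ⊔ R.X e (R.opp β) : Subgroup G) := by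
  have hx' := h a e (Subgroup.mem_sup_left hx)
  have hy' := h b e (Subgroup.mem_sup_right hy)
  exact mul_mem (mul_mem (mul_mem hx' hy') (inv_mem hx')) (inv_mem hy')

theorem Orthogonal.commute_of_mem_X {α β : Φ} (h : R.Orthogonal α β) {a b e : F} {x y t : G}
    (hx : x ∈ R.X a α) (hy : y ∈ R.X b (R.opp α)) (ht : t ∈ R.X e β ∨ t ∈ R.X e (R.opp β)) :
    Commute ⁅x, y⁆ t :=
  (Subgroup.mem_centralizer_iff.1 (h.commutator_mem_centralizer hx hy e) t
    (ht.elim Subgroup.mem_sup_left Subgroup.mem_sup_right)).symm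

end RootFamily

/-- A root family that generates `G`, satisfies the Chevalley commutator formula for roots in a
common half space, and has enough decompositions. -/
structure RootGradedGroup (G F Φ W : Type*) [Group G] extends RootFamily G F Φ W where
  wt_opp : ∀ φ α, wt φ (opp α) = -wt φ α
  elementary_top : toRootFamily.elementary top = ⊤
  isProduct_top_left : ∀ a, IsProduct top a a
  isProduct_symm : ∀ {a b c}, IsProduct a b c → IsProduct b a c
  commute_of_mem_X : ∀ {a b α x y}, x ∈ X a α → y ∈ X b α → Commute x y
  commutator_X_le : ∀ {a b c φ α β}, IsProduct a b c → 0 ≤ wt φ α → 0 < wt φ β →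
    ⁅X a α, X b β⁆ ≤ toRootFamily.unipotent φ c
  separated_or_sameRoot : ∀ α β, toRootFamily.Separated α β ∨
    toRootFamily.SameRoot α β ∨ toRootFamily.SameRoot (opp α) β
  exists_isDecomposition : ∀ α, ∃ γ δ σ, toRootFamily.IsDecomposition α γ δ σ
  reachable : ∀ β α, toRootFamily.Reachable β α

namespace RootGradedGroup

variable {G F Φ W : Type*} [Group G] (R : RootGradedGroup G F Φ W)

theorem isProduct_top_right (a : F) : R.IsProduct a R.top a :=
  R.isProduct_symm (R.isProduct_top_left a)

theorem le_normalizer_unipotent {φ : W} {γ : Φ} (b : F) (hγ : 0 ≤ R.wt φ γ) :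
    R.X R.top γ ≤ Subgroup.normalizer (R.unipotent φ b) := by
  rw [Subgroup.le_normalizer_iff]
  refine fun z hz u hu ↦ conj_mem_of_mem_iSup (fun δ x hx ↦ ?_) hu
  rw [← MulAut.conj_apply, conj_eq_commutatorElement_mul]
  exact mul_mem (Subgroup.commutator_le.1
    (R.commutator_X_le (R.isProduct_top_left b) hγ δ.2) z hz x hx)
    (RootFamily.X_le_unipotent b δ.2 hx)

theorem conj_mem_unipotent {φ : W} {γ : Φ} {b : F} {z u : G} (hγ : 0 ≤ R.wt φ γ)
    (hz : z ∈ R.X R.top γ) (hu : u ∈ R.unipotent φ b) : z * u * z⁻¹ ∈ R.unipotent φ b :=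
  Subgroup.le_normalizer_iff.1 (R.le_normalizer_unipotent b hγ) z hz u hu

theorem commutator_X_unipotent_top_le {φ : W} {α : Φ} (b : F) (hα : 0 ≤ R.wt φ α) :
    ⁅R.X b α, R.unipotent φ R.top⁆ ≤ R.unipotent φ b :=
  commutator_iSup_le_of_le_normalizer
    (iSup_le fun γ ↦ R.le_normalizer_unipotent b γ.2.le)
    fun γ ↦ R.commutator_X_le (R.isProduct_top_right b) hα γ.2

theorem commutator_conj_mem_unipotent {φ : W} {b : F} {α δ : Φ} {x z d : G}
    (hα : R.wt φ α = 0) (hδ : 0 < R.wt φ δ) (hx : x ∈ R.X b α)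
    (hz : z ∈ R.X R.top (R.opp α)) (hd : d ∈ R.X R.top δ) :
    ⁅z * x * z⁻¹, d⁆ ∈ R.unipotent φ b := by
  have hopp : 0 ≤ R.wt φ (R.opp α) := by rw [R.wt_opp, hα, neg_zero]
  have conj_d : z⁻¹ * d * z⁻¹⁻¹ ∈ R.unipotent φ R.top :=
    R.conj_mem_unipotent hopp (inv_mem hz) (RootFamily.X_le_unipotent _ hδ hd)
  have h := R.conj_mem_unipotent hopp hz
    (Subgroup.commutator_le.1 (R.commutator_X_unipotent_top_le b hα.ge) x hx _ conj_d)
  rw [conjugate_commutatorElement] at h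
  simpa [mul_assoc] using h

theorem commutator_conj_mem_elementary {b : F} {α δ : Φ} {x z d : G} (h : R.Separated α δ)
    (hx : x ∈ R.X b α) (hz : z ∈ R.X R.top (R.opp α)) (hd : d ∈ R.X R.top δ) :
    ⁅z * x * z⁻¹, d⁆ ∈ R.elementary b := by
  obtain ⟨φ, hα, hδ⟩ := h
  exact R.unipotent_le_elementary φ b (R.commutator_conj_mem_unipotent hα hδ hx hz hd)

theorem conj_mem_elementary_or_sameRoot {b : F} {α β : Φ} {x w : G} (hx : x ∈ R.X b α)
    (hw : w ∈ R.X R.top β) : w * x * w⁻¹ ∈ R.elementary b ∨ R.SameRoot (R.opp α) β := by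
  rcases R.separated_or_sameRoot α β with ⟨φ, hα, hβ⟩ | hsame | hopp
  · left
    have h := R.unipotent_le_elementary φ b <| Subgroup.commutator_le.1
      (R.commutator_X_le (R.isProduct_top_right b) hα.ge hβ) x hx w hw
    rw [← MulAut.conj_apply, conj_eq_commutatorElement_mul, ← commutatorElement_inv]
    exact mul_mem (inv_mem h) (R.X_le_elementary b α hx)
  · left
    rw [← hsame.2] at hw
    rw [(R.commute_of_mem_X hw hx).eq, mul_inv_cancel_right]
    exact R.X_le_elementary b α hx
  · exact Or.inr hopp

/-! ### Elementary conjugates -/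

theorem conj_elementary_mem {b : F} {β : Φ} {w f : G} (hw : w ∈ R.X R.top β)
    (hf : f ∈ R.elementary b) : w * f * w⁻¹ ∈ Subgroup.closure (R.elementaryConj b) := by
  refine conj_mem_of_mem_iSup (fun α x hx ↦ ?_) hf
  rcases R.conj_mem_elementary_or_sameRoot hx hw with h | hopp
  · exact RootFamily.elementary_le_closure_elementaryConj b h
  · rw [← hopp.2] at hw
    exact Subgroup.subset_closure (RootFamily.conj_mem_elementaryConj hx hw)

theorem separated_of_sameRoot_opp {α β δ : Φ} (h : R.SameRoot (R.opp α) β)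
    (hβδ : R.Separated β δ) : R.Separated α δ := by
  obtain ⟨φ, hβ, hδ⟩ := hβδ
  have hφ := h.1 φ
  rw [R.wt_opp] at hφ
  exact ⟨φ, by lia, hδ⟩

theorem conj_mul_elementary_mem {b : F} {β δ : Φ} {w d f : G} (h : R.Separated β δ)
    (hw : w ∈ R.X R.top β) (hd : d ∈ R.X R.top δ) (hf : f ∈ R.elementary b) :
    d * w * f * (d * w)⁻¹ ∈ Subgroup.closure (R.elementaryConj b) := by
  refine conj_mem_of_mem_iSup (fun α x hx ↦ ?_) hf
  have conj_mul : d * w * x * (d * w)⁻¹ = d * (w * x * w⁻¹) * d⁻¹ := by group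
  rw [conj_mul]
  rcases R.conj_mem_elementary_or_sameRoot hx hw with hmem | hopp
  · exact R.conj_elementary_mem hd hmem
  · have hαδ := R.separated_of_sameRoot_opp hopp h
    rw [← hopp.2] at hw
    rw [conj_eq_mul_commutator_inv, conj_inv]
    exact mul_mem (Subgroup.subset_closure (RootFamily.conj_mem_elementaryConj hx hw))
      (RootFamily.elementary_le_closure_elementaryConj b
        (R.commutator_conj_mem_elementary hαδ (inv_mem hx) hw hd))

theorem conj_conj_elementary_mem {b : F} {β δ : Φ} {w d f : G} (hβδ : R.Separated β δ)
    (hδβ : R.Separated δ β) (hw : w ∈ R.X R.top β) (hd : d ∈ R.X R.top δ)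
    (hf : f ∈ R.elementary b) :
    w * d * w⁻¹ * f * (w * d * w⁻¹)⁻¹ ∈ Subgroup.closure (R.elementaryConj b) := by
  refine conj_mem_of_mem_iSup (fun α x hx ↦ ?_) hf
  rcases R.conj_mem_elementary_or_sameRoot hx (inv_mem hw) with hmem | hopp
  · have h := R.conj_mul_elementary_mem hδβ hd hw hmem
    simpa [mul_assoc] using h
  · have hαδ := R.separated_of_sameRoot_opp hopp hβδ
    have hw' := hw
    rw [← hopp.2] at hw'
    have h := R.conj_elementary_mem hw
      (R.commutator_conj_mem_elementary hαδ (inv_mem hx) (inv_mem hw') hd)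
    have conj_eq : w * d * w⁻¹ * x * (w * d * w⁻¹)⁻¹ =
        x * (w * ⁅w⁻¹ * x⁻¹ * w⁻¹⁻¹, d⁆ * w⁻¹) := by
      simp [commutatorElement_def, mul_assoc]
    rw [conj_eq]
    exact mul_mem (RootFamily.elementary_le_closure_elementaryConj b
      (R.X_le_elementary b α hx)) h

theorem conj_conj_mem_of_same {b : F} {α : Φ} {x z w : G} (hx : x ∈ R.X b α)
    (hz : z ∈ R.X R.top (R.opp α)) (hw : w ∈ R.X R.top α) :
    w * (z * x * z⁻¹) * w⁻¹ ∈ Subgroup.closure (R.elementaryConj b) := by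
  have elementary_le := RootFamily.elementary_le_closure_elementaryConj (R := R.toRootFamily) b
  obtain ⟨γ, δ, σ, hdec⟩ := R.exists_isDecomposition α
  obtain ⟨d, hd, g, hg, s, hs, hdgs⟩ := hdec.exists_eq _ w hw
  obtain ⟨φ, hα, hσ⟩ := hdec.separated_σ
  have mem_d := R.commutator_conj_mem_elementary hdec.separated_δ (inv_mem hx) hz hd
  have mem_g := R.commutator_conj_mem_elementary hdec.separated_γ (inv_mem hx) hz hg
  have mem_d_inv := R.commutator_conj_mem_elementary hdec.separated_δ (inv_mem hx) hz (inv_mem hd)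
  have mem_g_inv := R.commutator_conj_mem_elementary hdec.separated_γ (inv_mem hx) hz (inv_mem hg)
  have mem_s := R.conj_mem_unipotent hα.ge hw <| R.conj_mem_unipotent hσ.le (inv_mem hs) <|
    R.commutator_conj_mem_unipotent hα hσ (inv_mem hx) hz hs
  rw [conj_eq_mul_commutator_inv, conj_inv]
  generalize z * x⁻¹ * z⁻¹ = y at *
  have expand : ⁅y, w⁆ = ⁅y, d⁆ * (d * ⁅y, g⁆ * d⁻¹) * (d * g * ⁅y, d⁻¹⁆ * (d * g)⁻¹) *
      (d * g * d⁻¹ * ⁅y, g⁻¹⁆ * (d * g * d⁻¹)⁻¹) * (w * (s⁻¹ * ⁅y, s⁆ * s⁻¹⁻¹) * w⁻¹) := by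
    simp [← hdgs, commutatorElement_def, mul_assoc]
  rw [expand]
  refine mul_mem (Subgroup.subset_closure (RootFamily.conj_mem_elementaryConj hx hz)) ?_
  refine mul_mem (mul_mem (mul_mem (mul_mem (elementary_le mem_d) ?_) ?_) ?_) ?_
  · exact R.conj_elementary_mem hd mem_g
  · exact R.conj_mul_elementary_mem hdec.separated_γ_δ hg hd mem_d_inv
  · exact R.conj_conj_elementary_mem hdec.separated_δ_γ hdec.separated_γ_δ hd hg mem_g_inv
  · exact elementary_le (R.unipotent_le_elementary φ b mem_s)

theorem conj_closure_elementaryConj_mem {b : F} {β : Φ} {w y : G} (hw : w ∈ R.X R.top β)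
    (hy : y ∈ Subgroup.closure (R.elementaryConj b)) :
    w * y * w⁻¹ ∈ Subgroup.closure (R.elementaryConj b) := by
  refine conj_mem_of_mem_closure ?_ hy
  rintro _ ⟨α, x, hx, z, hz, rfl⟩
  rcases R.separated_or_sameRoot α β with hsep | hsame | hopp
  · rw [conj_eq_mul_commutator_inv, conj_inv]
    exact mul_mem (Subgroup.subset_closure (RootFamily.conj_mem_elementaryConj hx hz))
      (RootFamily.elementary_le_closure_elementaryConj b
        (R.commutator_conj_mem_elementary hsep (inv_mem hx) hz hw))
  · rw [← hsame.2] at hw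
    exact R.conj_conj_mem_of_same hx hz hw
  · rw [← hopp.2] at hw
    have h := RootFamily.conj_mem_elementaryConj hx (mul_mem hw hz)
    simpa [mul_assoc] using Subgroup.subset_closure h

theorem relElementary_le_closure_elementaryConj (b : F) :
    R.relElementary b ≤ Subgroup.closure (R.elementaryConj b) := by
  have htop : ⊤ ≤ Subgroup.normalizer (Subgroup.closure (R.elementaryConj b) : Set G) := by
    rw [← R.elementary_top]
    exact iSup_le fun β ↦ Subgroup.le_normalizer_iff.2 fun w hw y hy ↦
      R.conj_closure_elementaryConj_mem hw hy
  have : (Subgroup.closure (R.elementaryConj b)).Normal :=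
    Subgroup.normalizer_eq_top_iff.1 (top_le_iff.1 htop)
  exact R.relElementary_le_iff.2 (RootFamily.elementary_le_closure_elementaryConj b)

/-! ### Commutators of relative elementary groups -/

section CommutatorBound

variable {Q : Subgroup G} [Q.Normal] {a b c : F}

theorem commutator_X_elementary_le (hL : R.IsProduct a b c) (hQ : R.elementary c ≤ Q) {γ : Φ}
    (hγ : ⁅R.X a γ, R.X b (R.opp γ)⁆ ≤ Q) : ⁅R.X a γ, R.elementary b⁆ ≤ Q := by
  refine commutator_iSup_le fun β ↦ ?_
  rcases R.separated_or_sameRoot γ β with ⟨φ, h0, h1⟩ | hsame | hopp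
  · exact (R.commutator_X_le hL h0.ge h1).trans ((R.unipotent_le_elementary φ c).trans hQ)
  · refine Subgroup.commutator_le.2 fun x hx y hy ↦ ?_
    rw [← hsame.2] at hy
    rw [commutatorElement_eq_one_iff_commute.2 (R.commute_of_mem_X hx hy)]
    exact one_mem Q
  · rwa [← hopp.2]

theorem commutator_opp_le_of_isDecomposition (hL : R.IsProduct a b c)
    (hQ : R.elementary c ≤ Q) {α γ δ σ : Φ} (hdec : R.IsDecomposition α γ δ σ)
    (hγ : ⁅R.X a γ, R.X b (R.opp γ)⁆ ≤ Q) (hσ : ⁅R.X a σ, R.X b (R.opp σ)⁆ ≤ Q) :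
    ⁅R.X a α, R.X b (R.opp α)⁆ ≤ Q := by
  refine Subgroup.commutator_le.2 fun x hx y hy ↦ ?_
  obtain ⟨d, hd, g, hg, s, hs, rfl⟩ := hdec.exists_eq a x hx
  obtain ⟨φ, hα, hδ⟩ := hdec.separated_δ
  have hy' := R.X_le_elementary b _ hy
  have comm_g := Subgroup.commutator_le.1 (R.commutator_X_elementary_le hL hQ hγ) g hg
  have comm_s := Subgroup.commutator_le.1 (R.commutator_X_elementary_le hL hQ hσ) s hs y hy'
  have conj_y : d⁻¹ * y * d⁻¹⁻¹ ∈ R.elementary b := by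
    rw [conj_eq_mul_commutator_inv]
    exact mul_mem hy' <| R.unipotent_le_elementary φ b <| Subgroup.commutator_le.1
      (R.commutator_X_le (R.isProduct_top_right b) (by rw [R.wt_opp, hα, neg_zero]) hδ)
      _ (inv_mem hy) _ (inv_mem hd)
  have comm_conj : ⁅d * g * d⁻¹, y⁆ ∈ Q := by
    have h := Subgroup.Normal.conj_mem (inferInstanceAs Q.Normal) _ (comm_g _ conj_y) d
    rw [conjugate_commutatorElement] at h
    simpa [mul_assoc] using h
  rw [← mem_centralizerMod_singleton] at comm_conj comm_s ⊢
  exact mul_mem (mul_mem comm_conj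
    (inv_mem (mem_centralizerMod_singleton.2 (comm_g y hy')))) comm_s

theorem commutator_elementary_le (hL : R.IsProduct a b c) (hQ : R.elementary c ≤ Q)
    (hopp : ∀ γ, ⁅R.X a γ, R.X b (R.opp γ)⁆ ≤ Q) : ⁅R.elementary a, R.elementary b⁆ ≤ Q := by
  rw [Subgroup.commutator_comm]
  refine commutator_iSup_le fun γ ↦ ?_
  rw [Subgroup.commutator_comm]
  exact R.commutator_X_elementary_le hL hQ (hopp γ)

theorem commutator_conj_mem_of_separated (hab : ⁅R.elementary a, R.elementary b⁆ ≤ Q)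
    {α γ : Φ} (hsep : R.Separated α γ) {x y z : G} (hx : x ∈ R.X a γ) (hy : y ∈ R.X b α)
    (hz : z ∈ R.X R.top (R.opp α)) : ⁅x, z * y * z⁻¹⁆ ∈ Q := by
  obtain ⟨φ, hα, hγ⟩ := hsep
  have conj_x : z⁻¹ * x * z⁻¹⁻¹ ∈ R.elementary a := R.unipotent_le_elementary φ a <|
    R.conj_mem_unipotent (by rw [R.wt_opp, hα, neg_zero]) (inv_mem hz)
      (RootFamily.X_le_unipotent a hγ hx)
  have h := Subgroup.Normal.conj_mem (inferInstanceAs Q.Normal) _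
    (Subgroup.commutator_le.1 hab _ conj_x _ (R.X_le_elementary b α hy)) z
  rw [conjugate_commutatorElement] at h
  simpa [mul_assoc] using h

theorem commutator_conj_mem_of_same (hab : ⁅R.elementary a, R.elementary b⁆ ≤ Q)
    {α : Φ} {x y z : G} (hx : x ∈ R.X a α) (hy : y ∈ R.X b α)
    (hz : z ∈ R.X R.top (R.opp α)) : ⁅x, z * y * z⁻¹⁆ ∈ Q := by
  obtain ⟨γ, δ, σ, hdec⟩ := R.exists_isDecomposition α
  obtain ⟨d, hd, g, hg, s, hs, rfl⟩ := hdec.exists_eq a x hx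
  have comm_g := R.commutator_conj_mem_of_separated hab hdec.separated_γ hg hy hz
  have comm_s := R.commutator_conj_mem_of_separated hab hdec.separated_σ hs hy hz
  have conj_d : ⁅z * y⁻¹ * z⁻¹, d⁻¹⁆ ∈ R.elementary b :=
    R.commutator_conj_mem_elementary hdec.separated_δ (inv_mem hy) hz (inv_mem hd)
  have comm_conj : ⁅d * g * d⁻¹, z * y * z⁻¹⁆ ∈ Q := by
    have mem_b := Subgroup.commutator_le.1 hab g (R.X_le_elementary a γ hg) _ conj_d
    rw [commutator_mem_comm, ← mem_centralizerMod_singleton] at comm_g mem_b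
    have h := Subgroup.Normal.conj_mem (inferInstanceAs Q.Normal) _ (commutator_mem_comm.1 <|
      mem_centralizerMod_singleton.1 (mul_mem comm_g mem_b)) d
    rw [← conj_inv, ← conj_eq_mul_commutator_inv, conjugate_commutatorElement] at h
    simpa [mul_assoc] using h
  rw [← mem_centralizerMod_singleton] at comm_conj comm_g comm_s ⊢
  exact mul_mem (mul_mem comm_conj (inv_mem comm_g)) comm_s

theorem commutator_conj_mem_of_opp (hab : ⁅R.elementary a, R.elementary b⁆ ≤ Q)
    {α : Φ} {x y z : G} (hx : x ∈ R.X a (R.opp α)) (hy : y ∈ R.X b α)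
    (hz : z ∈ R.X R.top (R.opp α)) : ⁅x, z * y * z⁻¹⁆ ∈ Q := by
  have h := Subgroup.Normal.conj_mem (inferInstanceAs Q.Normal) _
    (Subgroup.commutator_le.1 hab x (R.X_le_elementary a _ hx) y (R.X_le_elementary b α hy)) z
  rwa [conjugate_commutatorElement, (R.commute_of_mem_X hz hx).eq, mul_inv_cancel_right] at h

theorem elementary_le_centralizerMod_conj (hab : ⁅R.elementary a, R.elementary b⁆ ≤ Q)
    {α : Φ} {y z : G} (hy : y ∈ R.X b α) (hz : z ∈ R.X R.top (R.opp α)) :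
    R.elementary a ≤ centralizerMod Q {z * y * z⁻¹} := by
  refine iSup_le fun β x hx ↦ mem_centralizerMod_singleton.2 ?_
  rcases R.separated_or_sameRoot α β with hsep | hsame | hopp
  · exact R.commutator_conj_mem_of_separated hab hsep hx hy hz
  · exact R.commutator_conj_mem_of_same hab (hsame.2 a ▸ hx) hy hz
  · exact R.commutator_conj_mem_of_opp hab (hopp.2 a ▸ hx) hy hz

theorem commutator_relElementary_le (hL : R.IsProduct a b c) (hQ : R.elementary c ≤ Q)
    (hopp : ∀ γ, ⁅R.X a γ, R.X b (R.opp γ)⁆ ≤ Q) :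
    ⁅R.relElementary a, R.relElementary b⁆ ≤ Q := by
  have hab := R.commutator_elementary_le hL hQ hopp
  rw [← le_centralizerMod_iff, R.relElementary_le_iff]
  refine fun x hx ↦ mem_centralizerMod_iff_le.2 ?_
  refine (R.relElementary_le_closure_elementaryConj b).trans ((Subgroup.closure_le _).2 ?_)
  rintro _ ⟨α, y, hy, z, hz, rfl⟩
  exact mem_centralizerMod_singleton.2 <| commutator_mem_comm.1 <|
    mem_centralizerMod_singleton.1 (R.elementary_le_centralizerMod_conj hab hy hz hx)

/-! Elementary commutators `⁅x, y⁆` with `x` and `y` at opposite roots are central modulo the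
product level: if `t` lies at a root separated from theirs, then `t` conjugates `x` and `y` into
`x * u` and `y * v` with `u` and `v` in a common unipotent subgroup. -/

theorem mem_centralizerMod_commutator_opp_of_separated (hL : R.IsProduct a b c)
    (hQ : R.elementary c ≤ Q) {α β : Φ} (hsep : R.Separated α β) {x y t : G} (hx : x ∈ R.X a α)
    (hy : y ∈ R.X b (R.opp α)) (ht : t ∈ R.X R.top β) : t ∈ centralizerMod Q {⁅x, y⁆} := by
  obtain ⟨φ, hα, hβ⟩ := hsep
  have hopp : 0 ≤ R.wt φ (R.opp α) := by rw [R.wt_opp, hα, neg_zero]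
  have unipotent_le := (R.unipotent_le_elementary φ c).trans hQ
  have mem_u : ⁅x⁻¹, t⁆ ∈ R.unipotent φ a := Subgroup.commutator_le.1
    (R.commutator_X_le (R.isProduct_top_right a) hα.ge hβ) _ (inv_mem hx) t ht
  have mem_v : ⁅y⁻¹, t⁆ ∈ R.unipotent φ b := Subgroup.commutator_le.1
    (R.commutator_X_le (R.isProduct_top_right b) hopp hβ) _ (inv_mem hy) t ht
  have comm_left : ∀ {γ w}, w ∈ R.X a γ → 0 ≤ R.wt φ γ → ⁅w, ⁅y⁻¹, t⁆⁆ ∈ Q := fun {γ} w hw hγ ↦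
    Subgroup.commutator_le.1 (commutator_iSup_le fun δ ↦
      (R.commutator_X_le hL hγ δ.2).trans unipotent_le) w hw _ mem_v
  have comm_uv : ⁅⁅x⁻¹, t⁆, ⁅y⁻¹, t⁆⁆ ∈ Q := by
    have h : R.unipotent φ a ≤ centralizerMod Q {⁅y⁻¹, t⁆} :=
      iSup_le fun γ w hw ↦ mem_centralizerMod_singleton.2 (comm_left hw γ.2.le)
    exact mem_centralizerMod_singleton.1 (h mem_u)
  have comm_uy : ⁅⁅x⁻¹, t⁆, y⁆ ∈ Q := commutator_mem_comm.1 <| Subgroup.commutator_le.1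
    (commutator_iSup_le fun δ ↦
      (R.commutator_X_le (R.isProduct_symm hL) hopp δ.2).trans unipotent_le) y hy _ mem_u
  have comm_xv := comm_left hx hα.ge
  rw [commutator_mem_iff_commute_quotient] at comm_uv comm_uy comm_xv
  have key := commutatorElement_mul_mul_of_commute comm_xv comm_uv comm_uy
  have conj_eq : t * ⁅x, y⁆ * t⁻¹ = ⁅x * ⁅x⁻¹, t⁆, y * ⁅y⁻¹, t⁆⁆ := by
    rw [conjugate_commutatorElement, conj_eq_mul_commutator_inv, conj_eq_mul_commutator_inv]
  rw [mem_centralizerMod_singleton, commutator_mem_iff_commute_quotient]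
  have conj_eq_mod : ((t * ⁅x, y⁆ * t⁻¹ : G) : G ⧸ Q) = (⁅x, y⁆ : G) := by
    rw [conj_eq]
    exact key
  exact mul_inv_eq_iff_eq_mul.1 conj_eq_mod

theorem mem_centralizerMod_commutator_opp_of_decomposition (hL : R.IsProduct a b c)
    (hQ : R.elementary c ≤ Q) {α β : Φ} (hβ : ∀ δ, R.Separated β δ → R.Separated α δ) {x y t : G}
    (hx : x ∈ R.X a α) (hy : y ∈ R.X b (R.opp α)) (ht : t ∈ R.X R.top β) :
    t ∈ centralizerMod Q {⁅x, y⁆} := by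
  obtain ⟨γ, δ, σ, hdec⟩ := R.exists_isDecomposition β
  obtain ⟨d, hd, g, hg, s, hs, rfl⟩ := hdec.exists_eq _ t ht
  have mem_of_separated {ε : Φ} (h : R.Separated β ε) {w : G} (hw : w ∈ R.X R.top ε) :
      w ∈ centralizerMod Q {⁅x, y⁆} :=
    R.mem_centralizerMod_commutator_opp_of_separated hL hQ (hβ ε h) hx hy hw
  have mem_d := mem_of_separated hdec.separated_δ hd
  have mem_g := mem_of_separated hdec.separated_γ hg
  have mem_s := mem_of_separated hdec.separated_σ hs
  exact mul_mem (mul_mem (mul_mem (mul_mem mem_d mem_g) (inv_mem mem_d)) (inv_mem mem_g)) mem_s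

theorem commutator_opp_le_centralizerMod_top (hL : R.IsProduct a b c) (hQ : R.elementary c ≤ Q)
    (α : Φ) : ⁅R.X a α, R.X b (R.opp α)⁆ ≤ centralizerMod Q (⊤ : Subgroup G) := by
  refine Subgroup.commutator_le.2 fun x hx y hy ↦ mem_centralizerMod_iff_le.2 ?_
  rw [← R.elementary_top]
  refine iSup_le fun β t ht ↦ ?_
  rcases R.separated_or_sameRoot α β with hsep | hsame | hopp
  · exact R.mem_centralizerMod_commutator_opp_of_separated hL hQ hsep hx hy ht
  · refine R.mem_centralizerMod_commutator_opp_of_decomposition hL hQ ?_ hx hy ht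
    rintro δ ⟨φ, hβ, hδ⟩
    exact ⟨φ, by rw [hsame.1, hβ], hδ⟩
  · exact R.mem_centralizerMod_commutator_opp_of_decomposition hL hQ
      (fun δ ↦ R.separated_of_sameRoot_opp hopp) hx hy ht

end CommutatorBound

variable {R}

theorem commutator_relElementary_le_centralizerMod_top {a b c : F} (hL : R.IsProduct a b c) :
    ⁅R.relElementary a, R.relElementary b⁆ ≤
      centralizerMod (R.relElementary c) (⊤ : Subgroup G) :=
  R.commutator_relElementary_le hL
    ((R.elementary_le_relElementary c).trans (le_centralizerMod _))
    (R.commutator_opp_le_centralizerMod_top hL (R.elementary_le_relElementary c))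

variable {a b c : F} {N : Subgroup G} [N.Normal]

/-- The subgroup of `⁅EU a, EU b⁆` commuting with `t` modulo `N` contains `EU c`, hence is normal
because `⁅EU a, EU b⁆` is central modulo `EU c`; so it suffices to find the elementary commutators
at a set of roots from which every root is reachable. -/
theorem commutator_le_centralizerMod_of_orthogonal (hL : R.IsProduct a b c)
    (hK : R.relElementary c ≤ ⁅R.relElementary a, R.relElementary b⁆) {t : G} {β : Φ}
    (hc : R.relElementary c ≤ centralizerMod N {t})
    (ht : ∀ α, R.Orthogonal α β → ∀ x ∈ R.X a α, ∀ y ∈ R.X b (R.opp α), Commute ⁅x, y⁆ t) :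
    ⁅R.relElementary a, R.relElementary b⁆ ≤ centralizerMod N {t} := by
  let M := ⁅R.relElementary a, R.relElementary b⁆ ⊓ centralizerMod N {t}
  have c_le : R.relElementary c ≤ M := le_inf hK hc
  have : M.Normal := normal_of_le_centralizerMod_top c_le
    (inf_le_left.trans (commutator_relElementary_le_centralizerMod_top hL))
  have hM := (R.elementary_le_relElementary c).trans c_le
  suffices opp_le : ∀ α, ⁅R.X a α, R.X b (R.opp α)⁆ ≤ M from
    (R.commutator_relElementary_le hL hM opp_le).trans inf_le_right
  intro α
  induction R.reachable β α with
  | of_orthogonal horth =>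
    refine le_inf (Subgroup.commutator_mono (R.X_le_relElementary a _)
      (R.X_le_relElementary b _)) (Subgroup.commutator_le.2 fun x hx y hy ↦ ?_)
    rw [mem_centralizerMod_singleton,
      commutatorElement_eq_one_iff_commute.2 (ht _ horth x hx y hy)]
    exact one_mem N
  | of_decomposition hdec _ _ hγ hσ => exact R.commutator_opp_le_of_isDecomposition hL hM hdec hγ hσ

theorem commutator_commutator_relElementary (hL : R.IsProduct a b c)
    (hK : R.relElementary c ≤ ⁅R.relElementary a, R.relElementary b⁆) (e : F) :
    ⁅⁅R.relElementary a, R.relElementary b⁆, R.relElementary e⁆ =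
      ⁅R.relElementary c, R.relElementary e⁆ := by
  refine le_antisymm ?_ (Subgroup.commutator_mono hK le_rfl)
  rw [Subgroup.commutator_comm, ← le_centralizerMod_iff, R.relElementary_le_iff]
  refine iSup_le fun β t ht ↦ mem_centralizerMod_iff_le.2 ?_
  refine commutator_le_centralizerMod_of_orthogonal hL hK (β := β) ?_ fun α hα x hx y hy ↦
    hα.commute_of_mem_X hx hy (Or.inl ht)
  exact fun k hk ↦ mem_centralizerMod_singleton.2 <|
    Subgroup.commutator_mem_commutator hk (R.X_le_relElementary e β ht)

theorem commutator_commutator_commutator_relElementary {a' b' c' : F} (hL : R.IsProduct a b c)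
    (hK : R.relElementary c ≤ ⁅R.relElementary a, R.relElementary b⁆)
    (hL' : R.IsProduct a' b' c')
    (hK' : R.relElementary c' ≤ ⁅R.relElementary a', R.relElementary b'⁆) :
    ⁅⁅R.relElementary a, R.relElementary b⁆, ⁅R.relElementary a', R.relElementary b'⁆⁆ =
      ⁅R.relElementary c, R.relElementary c'⁆ := by
  refine le_antisymm ?_ (Subgroup.commutator_mono hK hK')
  rw [Subgroup.commutator_comm, ← le_centralizerMod_iff]
  refine R.commutator_relElementary_le hL' ?_ fun β ↦ ?_
  · rw [← R.relElementary_le_iff, le_centralizerMod_iff, Subgroup.commutator_comm,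
      commutator_commutator_relElementary hL hK]
  · refine Subgroup.commutator_le.2 fun x' hx' y' hy' ↦ mem_centralizerMod_iff_le.2 ?_
    refine commutator_le_centralizerMod_of_orthogonal hL hK (β := β) (fun k hk ↦ ?_)
      fun α hα x hx y hy ↦ ?_
    · rw [mem_centralizerMod_singleton, Subgroup.commutator_comm (R.relElementary c),
        ← commutator_commutator_relElementary hL' hK' c,
        Subgroup.commutator_comm _ (R.relElementary c)]
      exact Subgroup.commutator_mem_commutator hk (Subgroup.commutator_mem_commutator
        (R.X_le_relElementary a' β hx') (R.X_le_relElementary b' _ hy'))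
    · have comm_x' := hα.commute_of_mem_X hx hy (Or.inl hx')
      have comm_y' := hα.commute_of_mem_X hx hy (Or.inr hy')
      exact ((comm_x'.mul_right comm_y').mul_right comm_x'.inv_right).mul_right comm_y'.inv_right

theorem commutator_eq_of_isLevelGroup {H H' : Subgroup G} {c c' : F} (h : R.IsLevelGroup H c)
    (h' : R.IsLevelGroup H' c') : ⁅H, H'⁆ = ⁅R.relElementary c, R.relElementary c'⁆ := by
  rcases h with rfl | ⟨a, b, hL, hK, rfl⟩ <;> rcases h' with rfl | ⟨a', b', hL', hK', rfl⟩
  · rfl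
  · rw [Subgroup.commutator_comm, commutator_commutator_relElementary hL' hK',
      Subgroup.commutator_comm]
  · exact commutator_commutator_relElementary hL hK c'
  · exact commutator_commutator_commutator_relElementary hL hK hL' hK'

end RootGradedGroup

/-! ### Indices, weights and roots -/

namespace Idx

variable {n : ℕ} {i j k l : Idx n}

@[simp] theorem neg_fst (i : Idx n) : (neg i).1 = i.1 := rfl

@[simp] theorem neg_snd (i : Idx n) : (neg i).2 = !i.2 := rfl

@[simp] theorem neg_inj : neg i = neg j ↔ i = j := neg_injective.eq_iff

theorem eq_or_eq_neg_of_fst_eq (h : i.1 = j.1) : i = j ∨ i = neg j := by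
  rcases eq_or_ne i.2 j.2 with h' | h'
  · exact Or.inl (Prod.ext h h')
  · exact Or.inr (Prod.ext h (Bool.eq_not.2 h'))

theorem eq_or_eq_neg_of_not_fst_ne (h : ¬(k.1 ≠ i.1 ∧ k.1 ≠ j.1)) :
    (k = i ∨ k = neg i) ∨ k = j ∨ k = neg j := by
  rw [← not_or, not_not] at h
  exact h.imp eq_or_eq_neg_of_fst_eq eq_or_eq_neg_of_fst_eq

theorem ne_of_fst_ne (h : i.1 ≠ j.1) : i ≠ j := fun hij ↦ h (congrArg Prod.fst hij)

theorem fst_ne_of_ne (h : i ≠ j) (h' : j ≠ neg i) : i.1 ≠ j.1 := fun hij ↦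
  (eq_or_eq_neg_of_fst_eq hij.symm).elim h.symm h'

/-- The value at the index `i` of the functional with coordinates `φ`; it is odd in `i`. -/
def weight (φ : Fin n → ℤ) (i : Idx n) : ℤ := eps i * φ i.1

@[simp] theorem weight_neg (φ : Fin n → ℤ) (i : Idx n) : weight φ (neg i) = -weight φ i := by
  unfold weight neg eps
  cases i.2 <;> simp

theorem weight_neg_left (φ : Fin n → ℤ) (i : Idx n) : weight (-φ) i = -weight φ i := by
  simp [weight]

theorem exists_weight_eq_one_of_fst_ne (i : Idx n) :
    ∃ φ, weight φ i = 1 ∧ ∀ j : Idx n, j.1 ≠ i.1 → weight φ j = 0 := by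
  refine ⟨Pi.single i.1 (eps i), ?_, fun j h ↦ by simp [weight, h]⟩
  unfold weight eps
  cases i.2 <;> simp

theorem exists_weight_eq_one (h : i.1 ≠ j.1) : ∃ φ, weight φ i = 1 ∧ weight φ j = 1 := by
  obtain ⟨φ, hi, hφ⟩ := exists_weight_eq_one_of_fst_ne i
  obtain ⟨ψ, hj, hψ⟩ := exists_weight_eq_one_of_fst_ne j
  refine ⟨φ + ψ, ?_⟩
  simp only [weight, Pi.add_apply, mul_add] at *
  rw [hi, hj, hφ j h.symm, hψ i h]
  simp

theorem weight_lt_one_of_ne {φ : Fin n → ℤ} (hk : weight φ k = 1)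
    (hφ : ∀ j : Idx n, j.1 ≠ k.1 → weight φ j = 0) (hkl : k ≠ l) : weight φ l < 1 := by
  by_cases h : l.1 = k.1
  · obtain rfl := (eq_or_eq_neg_of_fst_eq h).resolve_left hkl.symm
    simp [hk]
  · simp [hφ l h]

theorem exists_separating_of_left (hkl : k ≠ l) (hki : k.1 ≠ i.1) (hkj : k.1 ≠ j.1) :
    ∃ φ, weight φ i - weight φ j = 0 ∧ 0 < weight φ k - weight φ l := by
  obtain ⟨φ, hk, hφ⟩ := exists_weight_eq_one_of_fst_ne k
  have hl := weight_lt_one_of_ne hk hφ hkl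
  exact ⟨φ, by rw [hφ i hki.symm, hφ j hkj.symm, sub_self], by lia⟩

theorem exists_separating_of_right (hkl : k ≠ l) (hli : l.1 ≠ i.1) (hlj : l.1 ≠ j.1) :
    ∃ φ, weight φ i - weight φ j = 0 ∧ 0 < weight φ k - weight φ l := by
  obtain ⟨φ, hij, hlk⟩ := exists_separating_of_left (i := i) (j := j)
    (neg_injective.ne hkl.symm) hli hlj
  exact ⟨φ, hij, by simp only [weight_neg] at hlk; lia⟩

theorem exists_fst_notMem {s : Finset (Fin n)} (hs : s.card < n) : ∃ k : Idx n, k.1 ∉ s := by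
  obtain ⟨k, -, hk⟩ := Finset.exists_mem_notMem_of_card_lt_card
    (s := s) (t := (Finset.univ : Finset (Fin n))) (by rwa [Finset.card_univ, Fintype.card_fin])
  exact ⟨(k, true), hk⟩

theorem exists_fst_ne_ne (hn : 3 ≤ n) (a b : Fin n) : ∃ k : Idx n, k.1 ≠ a ∧ k.1 ≠ b := by
  simpa using exists_fst_notMem (s := {a, b}) (Finset.card_le_two.trans_lt hn)

theorem exists_fst_ne_ne_ne (hn : 4 ≤ n) (a b c : Fin n) :
    ∃ k : Idx n, k.1 ≠ a ∧ k.1 ≠ b ∧ k.1 ≠ c := by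
  simpa using exists_fst_notMem (s := {a, b, c}) (Finset.card_le_three.trans_lt hn)

end Idx

/-- A root of the group of type `C_n`, presented as a position `(i, j)` off the diagonal. The
positions `(i, j)` and `(-j, -i)` present the same root. -/
abbrev Root (n : ℕ) := {p : Idx n × Idx n // p.1 ≠ p.2}

namespace Root

variable {n : ℕ}

/-- The position `(j, i)` of the opposite root. -/
def opp (p : Root n) : Root n := ⟨(p.1.2, p.1.1), p.2.symm⟩

/-- The position `(-j, -i)`, which presents the same root. -/
def dual (p : Root n) : Root n := ⟨(Idx.neg p.1.2, Idx.neg p.1.1), Idx.neg_injective.ne p.2.symm⟩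

/-- The value of the functional with coordinates `φ` at the root `p`. -/
def weight (φ : Fin n → ℤ) (p : Root n) : ℤ := Idx.weight φ p.1.1 - Idx.weight φ p.1.2

theorem weight_opp (φ : Fin n → ℤ) (p : Root n) : p.opp.weight φ = -p.weight φ :=
  (neg_sub _ _).symm

theorem weight_dual (φ : Fin n → ℤ) (p : Root n) : p.dual.weight φ = p.weight φ := by
  simp only [weight, dual, Idx.weight_neg]
  ring

theorem eq_or_separated (p q : Root n) :
    q = p ∨ q = p.dual ∨ q = p.opp ∨ q = p.opp.dual ∨ ∃ φ, p.weight φ = 0 ∧ 0 < q.weight φ := by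
  obtain ⟨⟨i, j⟩, hij⟩ := p
  obtain ⟨⟨k, l⟩, hkl⟩ := q
  simp only [Subtype.ext_iff, Prod.mk.injEq, opp, dual, weight]
  by_cases hk : k.1 ≠ i.1 ∧ k.1 ≠ j.1
  · simp only [Idx.exists_separating_of_left hkl hk.1 hk.2, or_true]
  by_cases hl : l.1 ≠ i.1 ∧ l.1 ≠ j.1
  · simp only [Idx.exists_separating_of_right hkl hl.1 hl.2, or_true]
  replace hk := Idx.eq_or_eq_neg_of_not_fst_ne hk
  replace hl := Idx.eq_or_eq_neg_of_not_fst_ne hl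
  by_cases hs : i.1 = j.1
  · obtain rfl : j = Idx.neg i := (Idx.eq_or_eq_neg_of_fst_eq hs.symm).resolve_left hij.symm
    grind [Idx.neg_neg]
  -- Now `k` and `l` lie in `{±i, ±j}`, and the functional below is `1` on `i, j`, `-1` on `-i, -j`.
  obtain ⟨φ, hi, hj⟩ := Idx.exists_weight_eq_one hs
  have hni := Idx.weight_neg φ i
  have hnj := Idx.weight_neg φ j
  have separated (h : Idx.weight φ k - Idx.weight φ l ≠ 0) :
      ∃ φ, Idx.weight φ i - Idx.weight φ j = 0 ∧ 0 < Idx.weight φ k - Idx.weight φ l := by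
    rcases h.lt_or_gt with h | h
    · exact ⟨-φ, by simp only [Idx.weight_neg_left]; lia, by simp only [Idx.weight_neg_left]; lia⟩
    · exact ⟨φ, by lia, h⟩
  grind

end Root

/-! ### Elementary generators -/

namespace FormRingData

variable {A : Type*} [Ring A] {n : ℕ} (D : FormRingData A)

@[simp] theorem bar_one : D.bar 1 = 1 := by
  have h := D.bar_mul (D.bar 1) 1
  rwa [mul_one, D.bar_bar, mul_one, eq_comm] at h

theorem bar_lam_mul_lam : D.bar D.lam * D.lam = 1 := by rw [← D.lam_comm, D.lam_bar]

theorem bar_lam_comm (a : A) : D.bar D.lam * a = a * D.bar D.lam := by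
  have h := congrArg D.bar (D.lam_comm (D.bar a))
  rwa [D.bar_mul, D.bar_mul, D.bar_bar, eq_comm] at h

/-- The scalar `λ^{-(ε(i)+1)/2}` relating the parameters at the position `(i, -i)` to `Λ`. -/
def nu (i : Idx n) : A := if i.2 then D.bar D.lam else 1

theorem lpow_neg_eps (i : Idx n) : D.lpow (-(Idx.eps i + 1) / 2) = D.nu i := by
  unfold lpow nu Idx.eps
  cases i.2 <;> simp

theorem nu_comm (i : Idx n) (a : A) : D.nu i * a = a * D.nu i := by
  unfold nu
  cases i.2 <;> simp [D.bar_lam_comm a]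

theorem nu_mul_bar_nu (i : Idx n) : D.nu i * D.bar (D.nu i) = 1 := by
  unfold nu
  cases i.2 <;> simp [D.bar_lam_mul_lam, D.bar_bar]

theorem bar_nu_mul_nu (i : Idx n) : D.bar (D.nu i) * D.nu i = 1 := by
  rw [← D.nu_comm, D.nu_mul_bar_nu]

theorem lam_mul_nu (i : Idx n) : D.lam * D.nu i = D.bar (D.nu (Idx.neg i)) := by
  unfold nu Idx.neg
  cases i.2 <;> simp [D.lam_bar, D.bar_bar]

/-- The scalar `λ^{(ε(j)-ε(i))/2}`, through which `T_ij(c)` acts at the position `(-j, -i)`. -/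
def kappa (i j : Idx n) : A := D.nu i * D.bar (D.nu j)

theorem lpow_eps_sub_eps (i j : Idx n) :
    D.lpow ((Idx.eps j - Idx.eps i) / 2) = D.kappa i j := by
  unfold lpow kappa nu Idx.eps
  cases i.2 <;> cases j.2 <;> simp [D.bar_lam_mul_lam, D.bar_bar]

theorem bar_nu_comm (i : Idx n) (a : A) : D.bar (D.nu i) * a = a * D.bar (D.nu i) := by
  have h := congrArg D.bar (D.nu_comm i (D.bar a))
  rwa [D.bar_mul, D.bar_mul, D.bar_bar, eq_comm] at h

theorem commute_kappa (i j : Idx n) (a : A) : Commute a (D.kappa i j) :=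
  Commute.mul_right (D.nu_comm i a).symm (D.bar_nu_comm j a).symm

theorem bar_kappa (i j : Idx n) : D.bar (D.kappa i j) = D.kappa j i := by
  rw [kappa, kappa, D.bar_mul, D.bar_bar]

theorem kappa_mul_kappa (i j l : Idx n) : D.kappa i j * D.kappa j l = D.kappa i l := by
  simp only [kappa]
  rw [mul_assoc, ← mul_assoc (D.bar (D.nu j)), D.bar_nu_mul_nu, one_mul]

theorem kappa_self (i : Idx n) : D.kappa i i = 1 := D.nu_mul_bar_nu i

theorem kappa_neg_neg (i j : Idx n) : D.kappa (Idx.neg j) (Idx.neg i) = D.kappa i j := by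
  rw [kappa, kappa, ← D.lam_mul_nu, ← D.bar_bar (D.nu (Idx.neg j)), ← D.lam_mul_nu, D.bar_mul,
    mul_assoc, ← mul_assoc (D.bar D.lam), D.bar_lam_mul_lam, one_mul, D.nu_comm]

theorem nu_mul_kappa (i j : Idx n) : D.nu j * D.kappa i j = D.nu i := by
  rw [kappa, ← mul_assoc, D.nu_comm, mul_assoc, D.nu_mul_bar_nu, mul_one]

theorem kappa_neg_right (i j : Idx n) : D.kappa i (Idx.neg j) = D.nu i * (D.lam * D.nu j) := by
  rw [kappa, D.lam_mul_nu]

/-- The elementary transvection at the position `(i, j)`, normalised so that the parameters of the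
long ones range over a subgroup of `Λ` independent of `i`. -/
def el (i j : Idx n) (c : A) : GLn A n :=
  if j = Idx.neg i then D.TL i (D.nu i * c) else D.TS i j c

/-- The nilpotent part `el i j c - 1`. -/
def elm (i j : Idx n) (c : A) : Matrix (Idx n) (Idx n) A :=
  if j = Idx.neg i then Matrix.single i (Idx.neg i) (D.nu i * c) else
    Matrix.single i j c - Matrix.single (Idx.neg j) (Idx.neg i) (D.kappa i j * D.bar c)

variable {D} {i j k l : Idx n}

theorem val_el (hij : i ≠ j) (c : A) : (D.el i j c).val = 1 + D.elm i j c := by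
  unfold el elm
  split_ifs with h
  · rfl
  · rw [TS, dif_neg hij, ← D.lpow_eps_sub_eps]
    rfl

theorem elm_long (i : Idx n) (c : A) :
    D.elm i (Idx.neg i) c = Matrix.single i (Idx.neg i) (D.nu i * c) :=
  if_pos rfl

theorem elm_short (hij : j ≠ Idx.neg i) (c : A) : D.elm i j c =
    Matrix.single i j c - Matrix.single (Idx.neg j) (Idx.neg i) (D.kappa i j * D.bar c) :=
  if_neg hij

theorem elm_add (i j : Idx n) (c d : A) : D.elm i j (c + d) = D.elm i j c + D.elm i j d := by
  unfold elm
  split_ifs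
  · rw [mul_add, Matrix.single_add]
  · rw [map_add, mul_add, Matrix.single_add, Matrix.single_add]
    abel

theorem elm_mul_elm_eq_zero (hjk : j ≠ k) (hjl : j ≠ Idx.neg l) (hik : Idx.neg i ≠ k)
    (hil : i ≠ l) (c d : A) : D.elm i j c * D.elm k l d = 0 := by
  unfold elm
  split_ifs with hij hkl hkl
  · subst hij
    simp [hik]
  · subst hij
    simp [mul_sub, hik, hil]
  · subst hkl
    simp [sub_mul, hjk, hik]
  · simp [mul_sub, sub_mul, hjk, hik, hil, hjl]

theorem el_add (hij : i ≠ j) (c d : A) : D.el i j (c + d) = D.el i j c * D.el i j d := by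
  apply Units.ext
  rw [Units.val_mul, val_el hij, val_el hij, val_el hij, elm_add, add_mul, mul_add, mul_add,
    elm_mul_elm_eq_zero hij.symm (Idx.neg_ne j).symm (Idx.neg_ne i) hij]
  simp only [one_mul, mul_one, add_zero]
  abel

theorem el_zero (hij : i ≠ j) : D.el i j 0 = (1 : GLn A n) := by
  simpa using D.el_add hij 0 0

theorem el_neg (hij : i ≠ j) (c : A) : D.el i j (-c) = (D.el i j c)⁻¹ := by
  rw [eq_inv_iff_mul_eq_one, ← el_add hij, neg_add_cancel, el_zero hij]

theorem commute_el (hij : i ≠ j) (hkl : k ≠ l) (hjk : j ≠ k) (hjl : j ≠ Idx.neg l)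
    (hik : Idx.neg i ≠ k) (hil : i ≠ l) (c d : A) : Commute (D.el i j c) (D.el k l d) := by
  apply Units.ext
  have hlj : Idx.neg l ≠ j := hjl.symm
  have hki : k ≠ Idx.neg i := hik.symm
  have hlj' : l ≠ Idx.neg j := fun h ↦ hlj (by rw [h, Idx.neg_neg])
  have hki' : Idx.neg k ≠ i := fun h ↦ hki (by rw [← h, Idx.neg_neg])
  rw [Units.val_mul, Units.val_mul, val_el hij, val_el hkl, add_mul, mul_add, mul_add, add_mul,
    mul_add, mul_add, elm_mul_elm_eq_zero hjk hjl hik hil,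
    elm_mul_elm_eq_zero hil.symm hlj' hki' hjk.symm]
  simp only [mul_one, one_mul, add_zero]
  abel

theorem el_eq_el_neg_neg (hij : i.1 ≠ j.1) (c : A) :
    D.el i j c = D.el (Idx.neg j) (Idx.neg i) (-(D.kappa i j * D.bar c)) := by
  apply Units.ext
  rw [val_el (Idx.ne_of_fst_ne hij),
    val_el (i := Idx.neg j) (j := Idx.neg i) (Idx.ne_of_fst_ne hij.symm),
    elm_short (Idx.ne_of_fst_ne hij.symm),
    elm_short (i := Idx.neg j) (j := Idx.neg i) (Idx.ne_of_fst_ne hij)]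
  have hc : D.kappa i j * D.bar (-(D.kappa i j * D.bar c)) = -c := by
    rw [map_neg, D.bar_mul, D.bar_bar, D.bar_kappa, (D.commute_kappa j i c).eq, mul_neg,
      ← mul_assoc, D.kappa_mul_kappa, D.kappa_self, one_mul]
  rw [D.kappa_neg_neg, hc, Idx.neg_neg, Idx.neg_neg, stdBasisMatrix_neg', stdBasisMatrix_neg']
  abel

/-! ### Chevalley commutator formulas -/

theorem commutator_el_short (hij : i.1 ≠ j.1) (hjl : j.1 ≠ l.1) (hil : i.1 ≠ l.1) (x y : A) :
    ⁅D.el i j x, D.el j l y⁆ = D.el i l (x * y) := by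
  rw [commutatorElement_def, mul_inv_eq_iff_eq_mul, mul_inv_eq_iff_eq_mul]
  apply Units.ext
  have hxy : D.kappa j l * D.bar y * (D.kappa i j * D.bar x) = D.kappa i l * D.bar (x * y) := by
    rw [(D.commute_kappa i j (D.bar y)).mul_mul_mul_comm, (D.commute_kappa i j _).eq,
      D.kappa_mul_kappa, D.bar_mul]
  simp only [Units.val_mul]
  rw [val_el (Idx.ne_of_fst_ne hij), val_el (Idx.ne_of_fst_ne hjl), val_el (Idx.ne_of_fst_ne hil),
    elm_short (Idx.ne_of_fst_ne hij.symm), elm_short (Idx.ne_of_fst_ne hjl.symm),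
    elm_short (Idx.ne_of_fst_ne hil.symm)]
  simp [add_mul, mul_add, sub_mul, mul_sub, Prod.ext_iff, hij, hjl, hil,
    hij.symm, hjl.symm, hil.symm, hxy]
  abel

theorem commutator_el_short_neg (hij : i.1 ≠ j.1) (x y : A) :
    ⁅D.el i j x, D.el j (Idx.neg i) y⁆ = D.el i (Idx.neg i)
      (D.bar (D.nu i) * (x * y) - D.lam * D.bar (D.bar (D.nu i) * (x * y))) := by
  rw [commutatorElement_def, mul_inv_eq_iff_eq_mul, mul_inv_eq_iff_eq_mul]
  apply Units.ext
  have hxy : D.nu i * (D.bar (D.nu i) * (x * y) - D.lam * D.bar (D.bar (D.nu i) * (x * y))) =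
      x * y - D.kappa j (Idx.neg i) * D.bar y * (D.kappa i j * D.bar x) := by
    rw [(D.commute_kappa i j (D.bar y)).mul_mul_mul_comm, (D.commute_kappa i j _).eq,
      D.kappa_mul_kappa, D.kappa_neg_right, mul_sub, ← mul_assoc, D.nu_mul_bar_nu, one_mul,
      D.bar_mul (D.bar _), D.bar_bar, ← D.nu_comm, D.bar_mul x]
    simp only [mul_assoc]
  simp only [Units.val_mul]
  rw [val_el (Idx.ne_of_fst_ne hij), val_el (j := Idx.neg i) (Idx.ne_of_fst_ne hij.symm),
    val_el (Idx.neg_ne i).symm, elm_short (Idx.ne_of_fst_ne hij.symm),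
    elm_short (j := Idx.neg i) (Idx.ne_of_fst_ne hij), elm_long, hxy]
  simp [add_mul, mul_add, Prod.ext_iff, hij, hij.symm, Idx.neg_neg, sub_eq_add_neg,
    stdBasisMatrix_neg', Matrix.single_add]
  abel

theorem commutator_el_short_long (hij : i.1 ≠ j.1) (x : A) {g : A} (hg : g ∈ D.Lambda) :
    ⁅D.el i j x, D.el j (Idx.neg j) g⁆ =
      D.el i (Idx.neg j) (D.nu j * (x * g)) * D.el i (Idx.neg i) (x * g * D.bar x) := by
  rw [commutatorElement_def, mul_inv_eq_iff_eq_mul, mul_inv_eq_iff_eq_mul]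
  apply Units.ext
  have h₁ : x * (D.nu j * g) = D.nu j * (x * g) := by rw [← mul_assoc, ← D.nu_comm, mul_assoc]
  have h₂ : D.nu j * g * (D.kappa i j * D.bar x) =
      -(D.kappa i (Idx.neg j) * D.bar (D.nu j * (x * g))) := by
    have hg' : D.nu j * g = -(D.nu j * (D.lam * D.bar g)) := by
      rw [← mul_neg, ← D.lambdaMax_mem g hg]
    rw [hg', neg_mul, (D.commute_kappa i j _).mul_mul_mul_comm, D.nu_mul_kappa,
      D.kappa_neg_right, D.bar_mul (D.nu j), ← D.bar_nu_comm, D.bar_mul x, mul_assoc D.lam,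
      mul_assoc (D.nu i), mul_assoc D.lam, ← mul_assoc (D.nu j), D.nu_mul_bar_nu, one_mul]
  have h₃ : D.nu j * (x * g) * (D.kappa i j * D.bar x) = D.nu i * (x * g * D.bar x) := by
    rw [(D.commute_kappa i j _).mul_mul_mul_comm, D.nu_mul_kappa]
  simp only [Units.val_mul]
  rw [val_el (Idx.ne_of_fst_ne hij), val_el (Idx.neg_ne j).symm,
    val_el (j := Idx.neg j) (Idx.ne_of_fst_ne hij), val_el (Idx.neg_ne i).symm,
    elm_short (Idx.ne_of_fst_ne hij.symm),
    elm_short (j := Idx.neg j) (Idx.ne_of_fst_ne hij.symm), elm_long, elm_long]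
  simp [add_mul, mul_add, sub_mul, mul_sub, Prod.ext_iff, hij,
    hij.symm, Idx.neg_neg, h₁, h₂, h₃, stdBasisMatrix_neg']
  abel

end FormRingData

/-! ### Form ideals -/

namespace FormRingData

variable {A : Type*} [Ring A] (D : FormRingData A)

theorem mul_mem_symI_left {S T : AddSubgroup A} {x y : A} (hx : x ∈ S) (hy : y ∈ T) :
    x * y ∈ symI S T :=
  AddSubgroup.mem_sup_left (AddSubgroup.subset_closure ⟨x, hx, y, hy, rfl⟩)

theorem mul_mem_symI_right {S T : AddSubgroup A} {x y : A} (hx : x ∈ S) (hy : y ∈ T) :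
    y * x ∈ symI S T :=
  AddSubgroup.mem_sup_right (AddSubgroup.subset_closure ⟨y, hy, x, hx, rfl⟩)

theorem symI_le {S T K : AddSubgroup A} :
    symI S T ≤ K ↔ ∀ x ∈ S, ∀ y ∈ T, x * y ∈ K ∧ y * x ∈ K := by
  refine ⟨fun h x hx y hy ↦ ⟨h (mul_mem_symI_left hx hy), h (mul_mem_symI_right hx hy)⟩,
    fun h ↦ sup_le ((AddSubgroup.closure_le _).2 ?_) ((AddSubgroup.closure_le _).2 ?_)⟩
  · rintro _ ⟨x, hx, y, hy, rfl⟩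
    exact (h x hx y hy).1
  · rintro _ ⟨y, hy, x, hx, rfl⟩
    exact (h x hx y hy).2

theorem sub_mem_gammaMin {K : AddSubgroup A} {x : A} (hx : x ∈ K) :
    x - D.lam * D.bar x ∈ D.gammaMin K :=
  AddSubgroup.subset_closure (Or.inl ⟨x, hx, rfl⟩)

theorem conj_mem_gammaMin {K : AddSubgroup A} {x g : A} (hx : x ∈ K) (hg : g ∈ D.Lambda) :
    x * g * D.bar x ∈ D.gammaMin K :=
  AddSubgroup.subset_closure (Or.inr ⟨x, hx, g, hg, rfl⟩)

theorem gammaMin_le {K L : AddSubgroup A} : D.gammaMin K ≤ L ↔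
    ∀ x ∈ K, x - D.lam * D.bar x ∈ L ∧ ∀ g ∈ D.Lambda, x * g * D.bar x ∈ L := by
  refine ⟨fun h x hx ↦ ⟨h (D.sub_mem_gammaMin hx), fun g hg ↦ h (D.conj_mem_gammaMin hx hg)⟩,
    fun h ↦ (AddSubgroup.closure_le _).2 ?_⟩
  rintro _ (⟨x, hx, rfl⟩ | ⟨x, hx, g, hg, rfl⟩)
  · exact (h x hx).1
  · exact (h x hx).2 g hg

theorem conj_mem_conjPar {S Γ : AddSubgroup A} {x g : A} (hx : x ∈ S) (hg : g ∈ Γ) :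
    x * g * D.bar x ∈ D.conjPar S Γ :=
  AddSubgroup.subset_closure ⟨x, hx, g, hg, rfl⟩

theorem conjPar_le {S Γ L : AddSubgroup A} :
    D.conjPar S Γ ≤ L ↔ ∀ x ∈ S, ∀ g ∈ Γ, x * g * D.bar x ∈ L := by
  refine ⟨fun h x hx g hg ↦ h (D.conj_mem_conjPar hx hg), fun h ↦ (AddSubgroup.closure_le _).2 ?_⟩
  rintro _ ⟨x, hx, g, hg, rfl⟩
  exact h x hx g hg

theorem symG_le {I Γ J Δ L : AddSubgroup A} : D.symG I Γ J Δ ≤ L ↔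
    D.gammaMin (symI I J) ≤ L ∧ D.conjPar J Γ ≤ L ∧ D.conjPar I Δ ≤ L := by
  rw [symG, sup_le_iff, sup_le_iff, and_assoc]

/-- The additive map `x ↦ c * x * bar c`. -/
def conjHom (c : A) : A →+ A := (AddMonoidHom.mulRight (D.bar c)).comp (AddMonoidHom.mulLeft c)

theorem conjHom_apply (c x : A) : D.conjHom c x = c * x * D.bar c := rfl

theorem conjHom_conj (c x g : A) :
    D.conjHom c (x * g * D.bar x) = c * x * g * D.bar (c * x) := by
  simp only [conjHom_apply, D.bar_mul, mul_assoc]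

theorem conjHom_sub (c x : A) : D.conjHom c (x - D.lam * D.bar x) =
    c * x * D.bar c - D.lam * D.bar (c * x * D.bar c) := by
  simp only [conjHom_apply, D.bar_mul, D.bar_bar, mul_sub, sub_mul, ← mul_assoc, ← D.lam_comm c]

end FormRingData

namespace FormIdeal

open FormRingData

variable {A : Type*} [Ring A] {D : FormRingData A} (a b : FormIdeal D)

theorem mul_mem_symI (c : A) {x : A} (hx : x ∈ symI a.I b.I) : c * x ∈ symI a.I b.I := by
  refine (symI_le (K := (symI a.I b.I).comap (AddMonoidHom.mulLeft c))).2
    (fun x hx y hy ↦ ?_) hx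
  simp only [AddSubgroup.mem_comap, AddMonoidHom.coe_mulLeft, ← mul_assoc]
  exact ⟨mul_mem_symI_left (a.mul_mem_left c x hx) hy,
    mul_mem_symI_right hx (b.mul_mem_left c y hy)⟩

theorem symI_mul_mem (c : A) {x : A} (hx : x ∈ symI a.I b.I) : x * c ∈ symI a.I b.I := by
  refine (symI_le (K := (symI a.I b.I).comap (AddMonoidHom.mulRight c))).2
    (fun x hx y hy ↦ ?_) hx
  simp only [AddSubgroup.mem_comap, AddMonoidHom.mulRight_apply, mul_assoc]
  exact ⟨mul_mem_symI_left hx (b.mul_mem_right c y hy),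
    mul_mem_symI_right (a.mul_mem_right c x hx) hy⟩

theorem bar_mem_symI {x : A} (hx : x ∈ symI a.I b.I) : D.bar x ∈ symI a.I b.I := by
  refine (symI_le (K := (symI a.I b.I).comap D.bar)).2 (fun x hx y hy ↦ ?_) hx
  simp only [AddSubgroup.mem_comap, D.bar_mul]
  exact ⟨mul_mem_symI_right (a.bar_mem x hx) (b.bar_mem y hy),
    mul_mem_symI_left (a.bar_mem x hx) (b.bar_mem y hy)⟩

theorem symG_le_symI : D.symG a.I a.Gamma b.I b.Gamma ≤ symI a.I b.I := by
  refine D.symG_le.2 ⟨D.gammaMin_le.2 fun x hx ↦ ⟨?_, fun g _ ↦ ?_⟩,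
    D.conjPar_le.2 fun y hy g hg ↦ ?_, D.conjPar_le.2 fun x hx g hg ↦ ?_⟩
  · exact sub_mem hx (mul_mem_symI a b _ (bar_mem_symI a b hx))
  · exact symI_mul_mem a b _ (symI_mul_mem a b _ hx)
  · exact symI_mul_mem a b _ (mul_mem_symI_right (a.gamma_le_I hg) hy)
  · exact symI_mul_mem a b _ (mul_mem_symI_left hx (b.gamma_le_I hg))

theorem symG_le_Lambda : D.symG a.I a.Gamma b.I b.Gamma ≤ D.Lambda :=
  D.symG_le.2 ⟨D.gammaMin_le.2 fun x _ ↦ ⟨D.lambdaMin_mem x, D.lambda_conj x⟩,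
    D.conjPar_le.2 fun y _ g hg ↦ D.lambda_conj y g (a.gamma_le_Lambda hg),
    D.conjPar_le.2 fun x _ g hg ↦ D.lambda_conj x g (b.gamma_le_Lambda hg)⟩

theorem symG_le_comap_conjHom (c : A) : D.symG a.I a.Gamma b.I b.Gamma ≤
    (D.symG a.I a.Gamma b.I b.Gamma).comap (D.conjHom c) := by
  obtain ⟨h_min, h_left, h_right⟩ := D.symG_le.1 (le_refl (D.symG a.I a.Gamma b.I b.Gamma))
  simp only [D.symG_le, D.gammaMin_le, D.conjPar_le, AddSubgroup.mem_comap, D.conjHom_sub,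
    D.conjHom_conj]
  refine ⟨fun x hx ↦ ⟨?_, fun g hg ↦ ?_⟩, fun y hy g hg ↦ ?_, fun x hx g hg ↦ ?_⟩
  · exact h_min (D.sub_mem_gammaMin (symI_mul_mem a b _ (mul_mem_symI a b c hx)))
  · exact h_min (D.conj_mem_gammaMin (mul_mem_symI a b c hx) hg)
  · exact h_left (D.conj_mem_conjPar (b.mul_mem_left c y hy) hg)
  · exact h_right (D.conj_mem_conjPar (a.mul_mem_left c x hx) hg)

/-- The symmetrised product `(I, Γ) ∘ (J, Δ)`. -/
def symProd : FormIdeal D where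
  I := symI a.I b.I
  Gamma := D.symG a.I a.Gamma b.I b.Gamma
  mul_mem_left c _ hx := mul_mem_symI a b c hx
  mul_mem_right c _ hx := symI_mul_mem a b c hx
  bar_mem _ hx := bar_mem_symI a b hx
  gammaMin_le := (D.symG_le.1 le_rfl).1
  gamma_le_I := symG_le_symI a b
  gamma_le_Lambda := symG_le_Lambda a b
  gamma_conj c _ hx := symG_le_comap_conjHom a b c hx

variable (D) in
/-- The form ideal `(A, Λ)`. -/
def top : FormIdeal D where
  I := ⊤
  Gamma := D.Lambda
  mul_mem_left _ _ _ := trivial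
  mul_mem_right _ _ _ := trivial
  bar_mem _ _ := trivial
  gammaMin_le := D.gammaMin_le.2 fun x _ ↦ ⟨D.lambdaMin_mem x, D.lambda_conj x⟩
  gamma_le_I := le_top
  gamma_le_Lambda := le_rfl
  gamma_conj := D.lambda_conj

/-- Products of an element of `a` and an element of `b`, in the sense of form ideals, lie in `c`. -/
structure IsProduct (a b c : FormIdeal D) : Prop where
  mul_mem : ∀ x ∈ a.I, ∀ y ∈ b.I, x * y ∈ c.I
  mul_mem_swap : ∀ x ∈ a.I, ∀ y ∈ b.I, y * x ∈ c.I
  conj_mem : ∀ x ∈ a.I, ∀ g ∈ b.Gamma, x * g * D.bar x ∈ c.Gamma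
  conj_mem_swap : ∀ y ∈ b.I, ∀ g ∈ a.Gamma, y * g * D.bar y ∈ c.Gamma

theorem IsProduct.symm {a b c : FormIdeal D} (h : IsProduct a b c) : IsProduct b a c where
  mul_mem y hy x hx := h.mul_mem_swap x hx y hy
  mul_mem_swap y hy x hx := h.mul_mem x hx y hy
  conj_mem := h.conj_mem_swap
  conj_mem_swap := h.conj_mem

theorem isProduct_top_left : IsProduct (top D) a a where
  mul_mem x _ := a.mul_mem_left x
  mul_mem_swap x _ := a.mul_mem_right x
  conj_mem x _ := a.gamma_conj x
  conj_mem_swap _ hy _ hg := a.gammaMin_le (D.conj_mem_gammaMin hy hg)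

theorem isProduct_symProd : IsProduct a b (symProd a b) where
  mul_mem _ hx _ hy := mul_mem_symI_left hx hy
  mul_mem_swap _ hx _ hy := mul_mem_symI_right hx hy
  conj_mem _ hx _ hg := (D.symG_le.1 le_rfl).2.2 (D.conj_mem_conjPar hx hg)
  conj_mem_swap _ hy _ hg := (D.symG_le.1 le_rfl).2.1 (D.conj_mem_conjPar hy hg)

end FormIdeal

/-! ### Root subgroups -/

namespace FormIdeal

open FormRingData

variable {A : Type*} [Ring A] {D : FormRingData A} {n : ℕ}

/-- The parameters `c` for which `D.el i j c` has level `a`. -/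
def level (a : FormIdeal D) (i j : Idx n) : AddSubgroup A := if j = Idx.neg i then a.Gamma else a.I

/-- The root subgroup of level `a` at the position `p`. -/
def rootSubgroup (a : FormIdeal D) (p : Root n) : Subgroup (GLn A n) where
  carrier := {x | ∃ c ∈ a.level p.1.1 p.1.2, D.el p.1.1 p.1.2 c = x}
  mul_mem' := by
    rintro _ _ ⟨c, hc, rfl⟩ ⟨d, hd, rfl⟩
    exact ⟨c + d, add_mem hc hd, el_add p.2 c d⟩
  one_mem' := ⟨0, zero_mem _, el_zero p.2⟩
  inv_mem' := by
    rintro _ ⟨c, hc, rfl⟩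
    exact ⟨-c, neg_mem hc, el_neg p.2 c⟩

/-- The subgroup of level `a` spanned by the roots that are positive for `φ`. -/
def unipotent (φ : Fin n → ℤ) (a : FormIdeal D) : Subgroup (GLn A n) :=
  ⨆ γ : {γ : Root n // 0 < γ.weight φ}, a.rootSubgroup γ

variable {a b c : FormIdeal D} {i j k l : Idx n}

theorem level_long (a : FormIdeal D) (i : Idx n) : a.level i (Idx.neg i) = a.Gamma := if_pos rfl

theorem level_short (a : FormIdeal D) (h : i.1 ≠ j.1) : a.level i j = a.I :=
  if_neg (Idx.ne_of_fst_ne (j := Idx.neg i) h.symm)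

theorem level_le_top (a : FormIdeal D) (i j : Idx n) : a.level i j ≤ (top D).level i j := by
  unfold level
  split_ifs
  exacts [a.gamma_le_Lambda, le_top]

theorem el_mem_rootSubgroup {z : A} (hij : i ≠ j) (hz : z ∈ a.level i j) :
    D.el i j z ∈ a.rootSubgroup ⟨(i, j), hij⟩ :=
  ⟨z, hz, rfl⟩

theorem el_mem_rootSubgroup_short {z : A} (hij : i.1 ≠ j.1) (hz : z ∈ a.I) :
    D.el i j z ∈ a.rootSubgroup ⟨(i, j), Idx.ne_of_fst_ne hij⟩ :=
  el_mem_rootSubgroup _ (by rwa [a.level_short hij])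

theorem el_mem_rootSubgroup_long (i : Idx n) {z : A} (hz : z ∈ a.Gamma) :
    D.el i (Idx.neg i) z ∈ a.rootSubgroup ⟨(i, Idx.neg i), (Idx.neg_ne i).symm⟩ :=
  el_mem_rootSubgroup _ (by rwa [a.level_long])

theorem rootSubgroup_le_unipotent {φ : Fin n → ℤ} {p : Root n} (hφ : 0 < p.weight φ) :
    a.rootSubgroup p ≤ a.unipotent φ := by
  rw [unipotent]
  exact le_iSup_of_le ⟨p, hφ⟩ le_rfl

theorem el_mem_unipotent_short {φ : Fin n → ℤ} {z : A} (hij : i.1 ≠ j.1)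
    (hφ : 0 < Idx.weight φ i - Idx.weight φ j) (hz : z ∈ a.I) : D.el i j z ∈ a.unipotent φ :=
  rootSubgroup_le_unipotent (p := ⟨(i, j), _⟩) hφ (el_mem_rootSubgroup_short hij hz)

theorem el_mem_unipotent_long {φ : Fin n → ℤ} {z : A} (hφ : 0 < Idx.weight φ i)
    (hz : z ∈ a.Gamma) : D.el i (Idx.neg i) z ∈ a.unipotent φ :=
  rootSubgroup_le_unipotent (by simp only [Root.weight, Idx.weight_neg]; lia)
    (el_mem_rootSubgroup_long i hz)

theorem exists_el_neg_neg_eq {z : A} (hij : i ≠ j) (hz : z ∈ a.level i j) :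
    ∃ w ∈ a.level (Idx.neg j) (Idx.neg i), D.el (Idx.neg j) (Idx.neg i) w = D.el i j z := by
  by_cases h : i.1 = j.1
  · obtain rfl : j = Idx.neg i := (Idx.eq_or_eq_neg_of_fst_eq h.symm).resolve_left hij.symm
    exact ⟨z, by rwa [Idx.neg_neg], by rw [Idx.neg_neg]⟩
  · rw [a.level_short h] at hz
    refine ⟨_, ?_, (el_eq_el_neg_neg h z).symm⟩
    rw [a.level_short (i := Idx.neg j) (j := Idx.neg i) (Ne.symm h)]
    exact neg_mem (a.mul_mem_left _ _ (a.bar_mem _ hz))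

theorem rootSubgroup_le_dual (a : FormIdeal D) (p : Root n) :
    a.rootSubgroup p ≤ a.rootSubgroup p.dual := by
  rintro _ ⟨z, hz, rfl⟩
  exact exists_el_neg_neg_eq p.2 hz

theorem rootSubgroup_dual (a : FormIdeal D) (p : Root n) :
    a.rootSubgroup p.dual = a.rootSubgroup p :=
  le_antisymm (by simpa [Root.dual, Idx.neg_neg] using a.rootSubgroup_le_dual p.dual)
    (a.rootSubgroup_le_dual p)

theorem commute_of_mem_rootSubgroup {p : Root n} {x y : GLn A n} (hx : x ∈ a.rootSubgroup p)
    (hy : y ∈ b.rootSubgroup p) : Commute x y := by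
  obtain ⟨z, -, rfl⟩ := hx
  obtain ⟨w, -, rfl⟩ := hy
  exact commute_el p.2 p.2 p.2.symm (Idx.neg_ne _).symm (Idx.neg_ne _) p.2 z w

/-! ### The Chevalley commutator formula in a half space -/

theorem commutator_short_long_mem_unipotent {φ : Fin n → ℤ} (h : IsProduct a b c)
    (hij : i.1 ≠ j.1) (hφ : 0 ≤ Idx.weight φ i - Idx.weight φ j)
    (hφ' : 0 < Idx.weight φ i + Idx.weight φ j) {x g : A} (hx : x ∈ a.I) (hg : g ∈ b.Gamma) :
    ⁅D.el i j x, D.el j (Idx.neg j) g⁆ ∈ c.unipotent φ := by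
  rw [commutator_el_short_long hij x (b.gamma_le_Lambda hg)]
  refine mul_mem (el_mem_unipotent_short (j := Idx.neg j) hij ?_ ?_)
    (el_mem_unipotent_long ?_ (h.conj_mem x hx g hg))
  · rw [Idx.weight_neg]
    lia
  · exact c.mul_mem_left _ _ (h.mul_mem x hx g (b.gamma_le_I hg))
  · lia

theorem commutator_short_short_mem_unipotent {φ : Fin n → ℤ} (h : IsProduct a b c)
    (hij : i.1 ≠ j.1) (hjl : j.1 ≠ l.1) (hφ : 0 < Idx.weight φ i - Idx.weight φ l) {x y : A}
    (hx : x ∈ a.I) (hy : y ∈ b.I) : ⁅D.el i j x, D.el j l y⁆ ∈ c.unipotent φ := by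
  have hxy := h.mul_mem x hx y hy
  by_cases hil : i.1 = l.1
  · obtain rfl | rfl := Idx.eq_or_eq_neg_of_fst_eq hil.symm
    · lia
    rw [commutator_el_short_neg hij]
    exact el_mem_unipotent_long (by rw [Idx.weight_neg] at hφ; lia)
      (c.gammaMin_le (D.sub_mem_gammaMin (c.mul_mem_left _ _ hxy)))
  · rw [commutator_el_short hij hjl hil]
    exact el_mem_unipotent_short hil hφ hxy

theorem commutator_el_mem_unipotent_of_adjacent {φ : Fin n → ℤ} (h : IsProduct a b c)
    (hij : i ≠ j) (hjl : j ≠ l) (hφ_ij : 0 ≤ Idx.weight φ i - Idx.weight φ j)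
    (hφ_jl : 0 ≤ Idx.weight φ j - Idx.weight φ l) (hφ_il : 0 < Idx.weight φ i - Idx.weight φ l)
    {x y : A} (hx : x ∈ a.level i j) (hy : y ∈ b.level j l) :
    ⁅D.el i j x, D.el j l y⁆ ∈ c.unipotent φ := by
  by_cases hij' : i.1 = j.1
  · obtain rfl : j = Idx.neg i := (Idx.eq_or_eq_neg_of_fst_eq hij'.symm).resolve_left hij.symm
    have hli : l.1 ≠ i.1 := fun hli ↦ by
      obtain rfl | rfl := Idx.eq_or_eq_neg_of_fst_eq hli
      · lia
      · exact hjl rfl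
    obtain ⟨y', hy', hyy'⟩ := exists_el_neg_neg_eq hjl hy
    rw [Idx.neg_neg] at hy' hyy'
    rw [b.level_short (i := Idx.neg l) hli] at hy'
    rw [a.level_long] at hx
    rw [← hyy', ← inv_mem_iff, commutatorElement_inv]
    simp only [Idx.weight_neg] at hφ_ij hφ_jl
    exact commutator_short_long_mem_unipotent (i := Idx.neg l) h.symm hli
      (by rw [Idx.weight_neg]; lia) (by rw [Idx.weight_neg]; lia) hy' hx
  rw [a.level_short hij'] at hx
  by_cases hjl' : j.1 = l.1
  · obtain rfl : l = Idx.neg j := (Idx.eq_or_eq_neg_of_fst_eq hjl'.symm).resolve_left hjl.symm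
    rw [b.level_long] at hy
    rw [Idx.weight_neg] at hφ_il
    exact commutator_short_long_mem_unipotent h hij' hφ_ij (by lia) hx hy
  · rw [b.level_short hjl'] at hy
    exact commutator_short_short_mem_unipotent h hij' hjl' hφ_il hx hy

theorem commutator_el_mem_unipotent_of_common_index {φ : Fin n → ℤ} (h : IsProduct a b c)
    (hij : i ≠ j) (hkl : k ≠ l) (hφ : 0 ≤ Idx.weight φ i - Idx.weight φ j)
    (hφ' : 0 < Idx.weight φ k - Idx.weight φ l) {x y : A} (hx : x ∈ a.level i j)
    (hy : y ∈ b.level k l) (hcommon : j = k ∨ i = l) :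
    ⁅D.el i j x, D.el k l y⁆ ∈ c.unipotent φ := by
  rcases hcommon with rfl | rfl
  · exact commutator_el_mem_unipotent_of_adjacent h hij hkl hφ hφ'.le (by lia) hx hy
  · rw [← inv_mem_iff, commutatorElement_inv]
    exact commutator_el_mem_unipotent_of_adjacent h.symm hkl hij hφ'.le hφ (by lia) hy hx

theorem commutator_rootSubgroup_le {φ : Fin n → ℤ} {p q : Root n} (h : IsProduct a b c)
    (hp : 0 ≤ p.weight φ) (hq : 0 < q.weight φ) :
    ⁅a.rootSubgroup p, b.rootSubgroup q⁆ ≤ c.unipotent φ := by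
  refine Subgroup.commutator_le.2 ?_
  rintro _ ⟨x, hx, rfl⟩ _ ⟨y, hy, rfl⟩
  by_cases hcommon : p.1.2 = q.1.1 ∨ p.1.1 = q.1.2
  · exact commutator_el_mem_unipotent_of_common_index h p.2 q.2 hp hq hx hy hcommon
  by_cases hdual : p.1.2 = Idx.neg q.1.2 ∨ p.1.1 = Idx.neg q.1.1
  · obtain ⟨y', hy', hyy'⟩ := exists_el_neg_neg_eq q.2 hy
    rw [← hyy']
    rw [← Root.weight_dual] at hq
    exact commutator_el_mem_unipotent_of_common_index h p.2 q.dual.2 hp hq hx hy' hdual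
  push Not at hcommon hdual
  have hik : Idx.neg p.1.1 ≠ q.1.1 := fun h ↦ hdual.2 (by rw [← h, Idx.neg_neg])
  rw [commutatorElement_eq_one_iff_commute.2
    (commute_el p.2 q.2 hcommon.1 hdual.1 hik hcommon.2 x y)]
  exact one_mem _

end FormIdeal

/-! ### The elementary unitary group as a root graded group -/

namespace FormIdeal

open FormRingData

variable {A : Type*} [Ring A] {D : FormRingData A} {n : ℕ}

theorem transvGen_eq_iUnion (a : FormIdeal D) :
    D.transvGen n a.I a.Gamma = ⋃ p : Root n, (a.rootSubgroup p : Set (GLn A n)) := by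
  ext x
  simp only [Set.mem_iUnion]
  constructor
  · rintro (⟨i, j, hij, hij', c, hc, rfl⟩ | ⟨i, g, hg, rfl⟩)
    · have hj : j ≠ Idx.neg i := fun h ↦ hij' (by rw [h, Idx.neg_neg])
      exact ⟨⟨(i, j), hij⟩, c, by rwa [level, if_neg hj], if_neg hj⟩
    · rw [D.lpow_neg_eps]
      exact ⟨⟨(i, Idx.neg i), (Idx.neg_ne i).symm⟩, g, by rwa [level_long], if_pos rfl⟩
  · rintro ⟨⟨⟨i, j⟩, hij⟩, c, hc, rfl⟩
    by_cases hj : j = Idx.neg i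
    · subst hj
      rw [level_long] at hc
      exact Or.inr ⟨i, c, hc, by rw [D.lpow_neg_eps]; exact if_pos rfl⟩
    · rw [level, if_neg hj] at hc
      exact Or.inl ⟨i, j, hij, fun h ↦ hj (by rw [h, Idx.neg_neg]), c, hc, if_neg hj⟩

theorem FU_eq_iSup (a : FormIdeal D) : D.FU n a.I a.Gamma = ⨆ p : Root n, a.rootSubgroup p := by
  rw [FU, transvGen_eq_iUnion, Subgroup.iSup_eq_closure]

theorem EUmax_eq_iSup (D : FormRingData A) (n : ℕ) :
    D.EUmax n = ⨆ p : Root n, (top D).rootSubgroup p :=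
  (top D).FU_eq_iSup

theorem rootSubgroup_le_EUmax (a : FormIdeal D) (p : Root n) : a.rootSubgroup p ≤ D.EUmax n := by
  rw [EUmax_eq_iSup]
  refine le_iSup_of_le p ?_
  rintro _ ⟨c, hc, rfl⟩
  exact ⟨c, a.level_le_top _ _ hc, rfl⟩

end FormIdeal

namespace FormRingData

variable {A : Type*} [Ring A] {D : FormRingData A} {n : ℕ}

variable (D n) in
/-- The root subgroups of `EU(2n, A, Λ)`, with the form ideals as levels. -/
def rootFamily : RootFamily (D.EUmax n) (FormIdeal D) (Root n) (Fin n → ℤ) where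
  X a p := (a.rootSubgroup p).subgroupOf (D.EUmax n)
  top := FormIdeal.top D
  opp := Root.opp
  wt := Root.weight
  IsProduct := FormIdeal.IsProduct

theorem map_X (a : FormIdeal D) (p : Root n) :
    ((D.rootFamily n).X a p).map (D.EUmax n).subtype = a.rootSubgroup p :=
  Subgroup.map_subgroupOf_eq_of_le (a.rootSubgroup_le_EUmax p)

theorem unipotent_le_map_unipotent (φ : Fin n → ℤ) (a : FormIdeal D) :
    a.unipotent φ ≤ ((D.rootFamily n).unipotent φ a).map (D.EUmax n).subtype := by
  rw [FormIdeal.unipotent, iSup_le_iff]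
  intro p
  rw [← map_X]
  exact Subgroup.map_mono (RootFamily.X_le_unipotent a p.2)

theorem map_elementary (a : FormIdeal D) :
    ((D.rootFamily n).elementary a).map (D.EUmax n).subtype = D.FU n a.I a.Gamma := by
  rw [RootFamily.elementary, Subgroup.map_iSup, a.FU_eq_iSup]
  exact iSup_congr fun p ↦ map_X a p

theorem rootFamily_elementary_top : (D.rootFamily n).elementary (FormIdeal.top D) = ⊤ := by
  apply Subgroup.map_injective (D.EUmax n).subtype_injective
  rw [map_elementary, ← MonoidHom.range_eq_map, Subgroup.range_subtype]
  rfl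

theorem rootFamily_commutator_X_le {a b c : FormIdeal D} {φ : Fin n → ℤ} {p q : Root n}
    (h : FormIdeal.IsProduct a b c) (hp : 0 ≤ p.weight φ) (hq : 0 < q.weight φ) :
    ⁅(D.rootFamily n).X a p, (D.rootFamily n).X b q⁆ ≤ (D.rootFamily n).unipotent φ c := by
  rw [← Subgroup.map_le_map_iff_of_injective (D.EUmax n).subtype_injective,
    Subgroup.map_commutator, map_X, map_X]
  exact (FormIdeal.commutator_rootSubgroup_le h hp hq).trans (unipotent_le_map_unipotent φ c)

theorem sameRoot_dual (p : Root n) : (D.rootFamily n).SameRoot p p.dual :=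
  ⟨fun φ ↦ (p.weight_dual φ).symm,
    fun a ↦ congrArg (Subgroup.subgroupOf · (D.EUmax n)) (a.rootSubgroup_dual p).symm⟩

theorem rootFamily_separated_or_sameRoot (p q : Root n) : (D.rootFamily n).Separated p q ∨
    (D.rootFamily n).SameRoot p q ∨ (D.rootFamily n).SameRoot p.opp q := by
  rcases p.eq_or_separated q with rfl | rfl | rfl | rfl | h
  · exact Or.inr (Or.inl ⟨fun _ ↦ rfl, fun _ ↦ rfl⟩)
  · exact Or.inr (Or.inl (sameRoot_dual p))
  · exact Or.inr (Or.inr ⟨fun _ ↦ rfl, fun _ ↦ rfl⟩)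
  · exact Or.inr (Or.inr (sameRoot_dual p.opp))
  · exact Or.inl h

end FormRingData

namespace Root

variable {n : ℕ}

/-- Neither `i` nor `-i` occurs in the position `q`. -/
def Avoids (q : Root n) (i : Idx n) : Prop := i.1 ≠ q.1.1.1 ∧ i.1 ≠ q.1.2.1

theorem Avoids.opp {q : Root n} {i : Idx n} (h : q.Avoids i) : q.opp.Avoids i := And.symm h

theorem Avoids.fst_ne {q : Root n} {i j : Idx n} (hi : q.Avoids i) (hj : ¬q.Avoids j) :
    i.1 ≠ j.1 :=
  fun h ↦ hj (by rwa [Avoids, ← h])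

theorem exists_avoids (hn : 4 ≤ n) (q : Root n) (i : Idx n) : ∃ k, q.Avoids k ∧ k.1 ≠ i.1 := by
  obtain ⟨k, hk₁, hk₂, hki⟩ := Idx.exists_fst_ne_ne_ne hn q.1.1.1 q.1.2.1 i.1
  exact ⟨k, ⟨hk₁, hk₂⟩, hki⟩

end Root

namespace FormIdeal

variable {A : Type*} [Ring A] {D : FormRingData A} {n : ℕ}

theorem commute_of_avoids {a b : FormIdeal D} {p q : Root n} (h₁ : q.Avoids p.1.1)
    (h₂ : q.Avoids p.1.2) {x y : GLn A n} (hx : x ∈ a.rootSubgroup p)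
    (hy : y ∈ b.rootSubgroup q) : Commute x y := by
  obtain ⟨c, -, rfl⟩ := hx
  obtain ⟨d, -, rfl⟩ := hy
  exact FormRingData.commute_el p.2 q.2 (Idx.ne_of_fst_ne h₂.1)
    (Idx.ne_of_fst_ne (j := Idx.neg _) h₂.2) (Idx.ne_of_fst_ne (i := Idx.neg _) h₁.1)
    (Idx.ne_of_fst_ne h₁.2) c d

end FormIdeal

namespace FormRingData

variable {A : Type*} [Ring A] {D : FormRingData A} {n : ℕ} {i j k : Idx n}

theorem rootFamily_commute_of_avoids {a b : FormIdeal D} {p q : Root n} (h₁ : q.Avoids p.1.1)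
    (h₂ : q.Avoids p.1.2) {x y : D.EUmax n} (hx : x ∈ (D.rootFamily n).X a p)
    (hy : y ∈ (D.rootFamily n).X b q) : Commute x y :=
  Subtype.ext (FormIdeal.commute_of_avoids h₁ h₂ hx hy).eq

theorem rootFamily_orthogonal {p q : Root n} (h₁ : q.Avoids p.1.1) (h₂ : q.Avoids p.1.2) :
    (D.rootFamily n).Orthogonal p q := by
  have commute {p q : Root n} (h₁ : q.Avoids p.1.1) (h₂ : q.Avoids p.1.2) (a b : FormIdeal D) :
      (D.rootFamily n).X b q ≤ Subgroup.centralizer ((D.rootFamily n).X a p) :=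
    fun _ hy ↦ Subgroup.mem_centralizer_iff.2 fun _ hx ↦
      (rootFamily_commute_of_avoids h₁ h₂ hx hy).eq
  intro a b
  refine sup_le ?_ ?_ <;> refine Subgroup.le_centralizer_iff.1 (sup_le ?_ ?_)
  · exact commute h₁ h₂ a b
  · exact commute h₁.opp h₂.opp a b
  · exact commute h₂ h₁ a b
  · exact commute h₂.opp h₁.opp a b

theorem exists_commutator_mul_eq {α γ δ σ : Root n}
    (h : ∀ (a : FormIdeal D), ∀ c ∈ a.level α.1.1 α.1.2, ∃ d ∈ (FormIdeal.top D).rootSubgroup δ,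
      ∃ g ∈ a.rootSubgroup γ, ∃ s ∈ a.rootSubgroup σ, ⁅d, g⁆ * s = D.el α.1.1 α.1.2 c)
    (a : FormIdeal D) (x : D.EUmax n) (hx : x ∈ (D.rootFamily n).X a α) :
    ∃ d ∈ (D.rootFamily n).X (FormIdeal.top D) δ, ∃ g ∈ (D.rootFamily n).X a γ,
      ∃ s ∈ (D.rootFamily n).X a σ, ⁅d, g⁆ * s = x := by
  obtain ⟨c, hc, hcx⟩ := hx
  obtain ⟨d, hd, g, hg, s, hs, h⟩ := h a c hc
  have mem_EUmax {a : FormIdeal D} {p : Root n} := @FormIdeal.rootSubgroup_le_EUmax _ _ D n a p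
  exact ⟨⟨d, mem_EUmax hd⟩, hd, ⟨g, mem_EUmax hg⟩, hg, ⟨s, mem_EUmax hs⟩, hs,
    Subtype.ext (h.trans hcx)⟩

theorem separated_of_left {p q : Root n} (h : p.Avoids q.1.1) : (D.rootFamily n).Separated p q :=
  Idx.exists_separating_of_left q.2 h.1 h.2

theorem separated_of_right {p q : Root n} (h : p.Avoids q.1.2) : (D.rootFamily n).Separated p q :=
  Idx.exists_separating_of_right q.2 h.1 h.2

theorem isDecomposition_short_right (hij : i.1 ≠ j.1) (hki : k.1 ≠ i.1) (hkj : k.1 ≠ j.1) :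
    (D.rootFamily n).IsDecomposition ⟨(i, j), Idx.ne_of_fst_ne hij⟩
      ⟨(i, k), Idx.ne_of_fst_ne hki.symm⟩ ⟨(k, j), Idx.ne_of_fst_ne hkj⟩
      ⟨(i, k), Idx.ne_of_fst_ne hki.symm⟩ where
  separated_γ := separated_of_right ⟨hki, hkj⟩
  separated_δ := separated_of_left ⟨hki, hkj⟩
  separated_σ := separated_of_right ⟨hki, hkj⟩
  separated_γ_δ := separated_of_right ⟨hij.symm, hkj.symm⟩
  separated_δ_γ := separated_of_left ⟨hki.symm, hij⟩
  exists_eq := exists_commutator_mul_eq fun a c hc ↦ by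
    rw [a.level_short hij] at hc
    refine ⟨_, FormIdeal.el_mem_rootSubgroup_short hkj (z := -1) trivial, _,
      FormIdeal.el_mem_rootSubgroup_short hki.symm hc, 1, one_mem _, ?_⟩
    rw [mul_one, ← commutatorElement_inv, commutator_el_short hki.symm hkj hij,
      ← el_neg (Idx.ne_of_fst_ne hij), mul_neg_one, neg_neg]

theorem isDecomposition_short_left (hij : i.1 ≠ j.1) (hki : k.1 ≠ i.1) (hkj : k.1 ≠ j.1) :
    (D.rootFamily n).IsDecomposition ⟨(i, j), Idx.ne_of_fst_ne hij⟩
      ⟨(k, j), Idx.ne_of_fst_ne hkj⟩ ⟨(i, k), Idx.ne_of_fst_ne hki.symm⟩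
      ⟨(k, j), Idx.ne_of_fst_ne hkj⟩ where
  separated_γ := separated_of_left ⟨hki, hkj⟩
  separated_δ := separated_of_right ⟨hki, hkj⟩
  separated_σ := separated_of_left ⟨hki, hkj⟩
  separated_γ_δ := separated_of_left ⟨hki.symm, hij⟩
  separated_δ_γ := separated_of_right ⟨hij.symm, hkj.symm⟩
  exists_eq := exists_commutator_mul_eq fun a c hc ↦ by
    rw [a.level_short hij] at hc
    refine ⟨_, FormIdeal.el_mem_rootSubgroup_short hki.symm (z := 1) trivial, _,
      FormIdeal.el_mem_rootSubgroup_short hkj hc, 1, one_mem _, ?_⟩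
    rw [mul_one, commutator_el_short hki.symm hkj hij, one_mul]

theorem isDecomposition_long (hki : k.1 ≠ i.1) :
    (D.rootFamily n).IsDecomposition ⟨(i, Idx.neg i), (Idx.neg_ne i).symm⟩
      ⟨(k, Idx.neg k), (Idx.neg_ne k).symm⟩ ⟨(i, k), Idx.ne_of_fst_ne hki.symm⟩
      ⟨(i, Idx.neg k), Idx.ne_of_fst_ne hki.symm⟩ where
  separated_γ := separated_of_left ⟨hki, hki⟩
  separated_δ := separated_of_right ⟨hki, hki⟩
  separated_σ := separated_of_right (q := ⟨(i, Idx.neg k), _⟩) ⟨hki, hki⟩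
  separated_γ_δ := separated_of_left ⟨hki.symm, hki.symm⟩
  separated_δ_γ := by
    obtain ⟨φ, hi, hk⟩ := Idx.exists_weight_eq_one hki.symm
    refine ⟨φ, ?_, ?_⟩ <;> simp [rootFamily, Root.weight, hi, hk]
  exists_eq := exists_commutator_mul_eq fun a c hc ↦ by
    rw [a.level_long] at hc
    have hik' : i ≠ Idx.neg k := Idx.ne_of_fst_ne hki.symm
    refine ⟨_, FormIdeal.el_mem_rootSubgroup_short hki.symm (z := 1) trivial, _,
      FormIdeal.el_mem_rootSubgroup_long k hc, _,
      inv_mem (FormIdeal.el_mem_rootSubgroup_short (j := Idx.neg k) hki.symm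
        (a.mul_mem_left (D.nu k) _ (a.gamma_le_I hc))), ?_⟩
    rw [commutator_el_short_long hki.symm 1 (a.gamma_le_Lambda hc), one_mul, bar_one, mul_one,
      (commute_el hik' (Idx.neg_ne i).symm hik'.symm (by rwa [Idx.neg_neg, ne_comm])
        (Idx.neg_ne i) (Idx.neg_ne i).symm _ _).eq, mul_inv_cancel_right]

theorem rootFamily_exists_isDecomposition (hn : 3 ≤ n) (p : Root n) :
    ∃ γ δ σ, (D.rootFamily n).IsDecomposition p γ δ σ := by
  obtain ⟨⟨i, j⟩, hij⟩ := p
  obtain ⟨k, hki, hkj⟩ := Idx.exists_fst_ne_ne hn i.1 j.1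
  by_cases h : j = Idx.neg i
  · subst h
    exact ⟨_, _, _, isDecomposition_long hki⟩
  · exact ⟨_, _, _, isDecomposition_short_right (Idx.fst_ne_of_ne hij h) hki hkj⟩

variable {q : Root n}

theorem reachable_of_avoids_left (hn : 4 ≤ n) (hij : i ≠ j) (hi : q.Avoids i) :
    (D.rootFamily n).Reachable q ⟨(i, j), hij⟩ := by
  by_cases hj : q.Avoids j
  · exact .of_orthogonal (rootFamily_orthogonal hi hj)
  · obtain ⟨k, hk, hki⟩ := q.exists_avoids hn i
    have hik := RootFamily.Reachable.of_orthogonal <| rootFamily_orthogonal (D := D)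
      (p := ⟨(i, k), Idx.ne_of_fst_ne hki.symm⟩) hi hk
    exact .of_decomposition (isDecomposition_short_right (hi.fst_ne hj) hki (hk.fst_ne hj)) hik hik

theorem reachable_of_avoids_right (hn : 4 ≤ n) (hij : i ≠ j) (hj : q.Avoids j) :
    (D.rootFamily n).Reachable q ⟨(i, j), hij⟩ := by
  by_cases hi : q.Avoids i
  · exact reachable_of_avoids_left hn hij hi
  · obtain ⟨k, hk, hkj⟩ := q.exists_avoids hn j
    have hkj' := reachable_of_avoids_left (D := D) hn (Idx.ne_of_fst_ne hkj) hk
    exact .of_decomposition (isDecomposition_short_left (hj.fst_ne hi).symm (hk.fst_ne hi) hkj)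
      hkj' hkj'

theorem rootFamily_reachable (hn : 4 ≤ n) (q p : Root n) : (D.rootFamily n).Reachable q p := by
  obtain ⟨⟨i, j⟩, hij⟩ := p
  by_cases hi : q.Avoids i
  · exact reachable_of_avoids_left hn hij hi
  obtain ⟨k, hk, hkj⟩ := q.exists_avoids hn j
  have hki := hk.fst_ne hi
  by_cases h : j = Idx.neg i
  · subst h
    exact .of_decomposition (isDecomposition_long hki) (reachable_of_avoids_left hn _ hk)
      (reachable_of_avoids_right hn _ hk)
  · have hik := reachable_of_avoids_right (D := D) hn (Idx.ne_of_fst_ne hki.symm) hk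
    exact .of_decomposition (isDecomposition_short_right (Idx.fst_ne_of_ne hij h) hki hkj) hik hik

variable (D) in
/-- The elementary unitary group `EU(2n, A, Λ)` with its root subgroups. -/
def rootGradedGroup (hn : 4 ≤ n) :
    RootGradedGroup (D.EUmax n) (FormIdeal D) (Root n) (Fin n → ℤ) where
  toRootFamily := D.rootFamily n
  wt_opp := Root.weight_opp
  elementary_top := rootFamily_elementary_top
  isProduct_top_left := FormIdeal.isProduct_top_left
  isProduct_symm := FormIdeal.IsProduct.symm
  commute_of_mem_X hx hy := Subtype.ext (FormIdeal.commute_of_mem_rootSubgroup hx hy).eq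
  commutator_X_le := rootFamily_commutator_X_le
  separated_or_sameRoot := rootFamily_separated_or_sameRoot
  exists_isDecomposition := rootFamily_exists_isDecomposition (Nat.le_of_lt hn)
  reachable := rootFamily_reachable hn

end FormRingData

/-! ### The elementary subgroup of a symmetrised product -/

namespace FormIdeal

open FormRingData

variable {A : Type*} [Ring A] {D : FormRingData A} {n : ℕ} {a b : FormIdeal D} {i j k : Idx n}

variable (D) in
/-- The parameters of the elementary transvections at the position `(i, j)` that lie in `K`. -/
def parameters (K : Subgroup (GLn A n)) (hij : i ≠ j) : AddSubgroup A where
  carrier := {c | D.el i j c ∈ K}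
  add_mem' {c d} (hc : _ ∈ K) (hd : _ ∈ K) := by simpa [el_add hij] using mul_mem hc hd
  zero_mem' := by simp [el_zero hij]
  neg_mem' := by simp [el_neg hij]

variable {K : Subgroup (GLn A n)}

theorem mem_parameters {hij : i ≠ j} {c : A} : c ∈ parameters D K hij ↔ D.el i j c ∈ K := Iff.rfl

theorem el_mem_of_mem_symI (hn : 3 ≤ n)
    (hK : ∀ p q : Root n, ⁅a.rootSubgroup p, b.rootSubgroup q⁆ ≤ K) (hij : i.1 ≠ j.1) {z : A}
    (hz : z ∈ symI a.I b.I) : D.el i j z ∈ K := by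
  obtain ⟨k, hki, hkj⟩ := Idx.exists_fst_ne_ne hn i.1 j.1
  refine (symI_le (K := parameters D K (Idx.ne_of_fst_ne hij))).2 (fun x hx y hy ↦ ⟨?_, ?_⟩) hz <;>
    rw [mem_parameters, ← commutator_el_short hki.symm hkj hij]
  · exact hK _ _ (Subgroup.commutator_mem_commutator (el_mem_rootSubgroup_short hki.symm hx)
      (el_mem_rootSubgroup_short hkj hy))
  · rw [commutator_mem_comm]
    exact hK _ _ (Subgroup.commutator_mem_commutator (el_mem_rootSubgroup_short hkj hx)
      (el_mem_rootSubgroup_short hki.symm hy))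

theorem el_conj_mem_of_commutator_mem (hik : i.1 ≠ k.1)
    (hK : ∀ z ∈ symI a.I b.I, D.el i (Idx.neg k) z ∈ K) {x g : A} (hxg : x * g ∈ symI a.I b.I)
    (hg : g ∈ D.Lambda) (h : ⁅D.el i k x, D.el k (Idx.neg k) g⁆ ∈ K) :
    D.el i (Idx.neg i) (x * g * D.bar x) ∈ K := by
  rw [commutator_el_short_long hik x hg] at h
  exact (K.mul_mem_cancel_left (hK _ (mul_mem_symI a b (D.nu k) hxg))).1 h

theorem el_mem_of_mem_symG (hn : 3 ≤ n)
    (hK : ∀ p q : Root n, ⁅a.rootSubgroup p, b.rootSubgroup q⁆ ≤ K)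
    (hK_top : ∀ p : Root n, ⁅K, (top D).rootSubgroup p⁆ ≤ K) {z : A}
    (hz : z ∈ D.symG a.I a.Gamma b.I b.Gamma) : D.el i (Idx.neg i) z ∈ K := by
  obtain ⟨k, hki, -⟩ := Idx.exists_fst_ne_ne hn i.1 i.1
  have short {j l : Idx n} (hjl : j.1 ≠ l.1) {z : A} (hz : z ∈ symI a.I b.I) : D.el j l z ∈ K :=
    el_mem_of_mem_symI hn hK hjl hz
  have conj {x g : A} := el_conj_mem_of_commutator_mem (D := D) (K := K) (x := x) (g := g) hki.symm
    fun z ↦ short (l := Idx.neg k) hki.symm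
  refine (D.symG_le (L := parameters D K (Idx.neg_ne i).symm)).2
    ⟨D.gammaMin_le.2 fun z hz ↦ ⟨?_, fun g hg ↦ ?_⟩,
      D.conjPar_le.2 fun y hy g hg ↦ ?_, D.conjPar_le.2 fun x hx g hg ↦ ?_⟩ hz <;>
    rw [mem_parameters]
  · have h := hK_top _ <| Subgroup.commutator_mem_commutator
      (short hki.symm (mul_mem_symI a b (D.nu i) hz))
      (el_mem_rootSubgroup_short (j := Idx.neg i) (z := 1) hki trivial)
    rwa [commutator_el_short_neg hki.symm, mul_one, ← mul_assoc, bar_nu_mul_nu, one_mul] at h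
  · exact conj (symI_mul_mem a b g hz) hg (hK_top _ (Subgroup.commutator_mem_commutator
      (short hki.symm hz) (el_mem_rootSubgroup_long k hg)))
  · refine conj (mul_mem_symI_right (a.gamma_le_I hg) hy) (a.gamma_le_Lambda hg) ?_
    rw [commutator_mem_comm]
    exact hK _ _ (Subgroup.commutator_mem_commutator (el_mem_rootSubgroup_long k hg)
      (el_mem_rootSubgroup_short hki.symm hy))
  · exact conj (mul_mem_symI_left hx (b.gamma_le_I hg)) (b.gamma_le_Lambda hg)
      (hK _ _ (Subgroup.commutator_mem_commutator (el_mem_rootSubgroup_short hki.symm hx)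
        (el_mem_rootSubgroup_long k hg)))

theorem rootSubgroup_symProd_le (hn : 3 ≤ n)
    (hK : ∀ p q : Root n, ⁅a.rootSubgroup p, b.rootSubgroup q⁆ ≤ K)
    (hK_top : ∀ p : Root n, ⁅K, (top D).rootSubgroup p⁆ ≤ K) (p : Root n) :
    (symProd a b).rootSubgroup p ≤ K := by
  obtain ⟨⟨i, j⟩, hij⟩ := p
  rintro _ ⟨c, hc, rfl⟩
  by_cases h : j = Idx.neg i
  · subst h
    rw [level_long] at hc
    exact el_mem_of_mem_symG hn hK hK_top hc
  · have hij' := Idx.fst_ne_of_ne hij h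
    rw [level_short _ hij'] at hc
    exact el_mem_of_mem_symI hn hK hij' hc

theorem relElementary_symProd_le_commutator (hn : 3 ≤ n) (a b : FormIdeal D) :
    (D.rootFamily n).relElementary (symProd a b) ≤
      ⁅(D.rootFamily n).relElementary a, (D.rootFamily n).relElementary b⁆ := by
  refine (D.rootFamily n).relElementary_le_iff.2 (iSup_le fun p ↦ ?_)
  rw [← Subgroup.map_le_map_iff_of_injective (D.EUmax n).subtype_injective, map_X]
  refine rootSubgroup_symProd_le hn (fun p q ↦ ?_) (fun p ↦ ?_) p <;>
    simp only [← map_X, ← Subgroup.map_commutator]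
  · exact Subgroup.map_mono (Subgroup.commutator_mono (RootFamily.X_le_relElementary _ a p)
      (RootFamily.X_le_relElementary _ b q))
  · exact Subgroup.map_mono (Subgroup.commutator_le_left _ _)

theorem conj_mem_EU {a : FormIdeal D} {g x : GLn A n} (hg : g ∈ D.EUmax n)
    (hx : x ∈ D.EU n a.I a.Gamma) : g * x * g⁻¹ ∈ D.EU n a.I a.Gamma := by
  refine conj_mem_of_mem_closure ?_ hx
  rintro _ ⟨h, hh, t, ht, rfl⟩
  exact Subgroup.subset_closure ⟨g * h, mul_mem hg hh, t, ht, by simp [mul_assoc]⟩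

theorem EU_eq_map_relElementary (a : FormIdeal D) :
    D.EU n a.I a.Gamma = ((D.rootFamily n).relElementary a).map (D.EUmax n).subtype := by
  apply le_antisymm
  · rw [EU, Subgroup.closure_le]
    rintro _ ⟨g, hg, t, ht, rfl⟩
    rw [transvGen_eq_iUnion, Set.mem_iUnion] at ht
    obtain ⟨p, ht⟩ := ht
    have ht' := RootFamily.X_le_relElementary (D.rootFamily n) a p
      (show ⟨t, a.rootSubgroup_le_EUmax p ht⟩ ∈ (D.rootFamily n).X a p from ht)
    exact ⟨_, Subgroup.Normal.conj_mem inferInstance _ ht' ⟨g, hg⟩, rfl⟩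
  · rw [Subgroup.map_le_iff_le_comap]
    have : ((D.EU n a.I a.Gamma).comap (D.EUmax n).subtype).Normal :=
      ⟨fun _ hx g ↦ conj_mem_EU g.2 hx⟩
    refine (D.rootFamily n).relElementary_le_iff.2 (iSup_le fun p x hx ↦ ?_)
    refine Subgroup.subset_closure ⟨1, one_mem _, x, ?_, by simp⟩
    rw [transvGen_eq_iUnion]
    exact Set.mem_iUnion_of_mem p hx

end FormIdeal

namespace CommTree

variable {A : Type*} [Ring A] {D : FormRingData A} {n : ℕ}

/-- The iterated symmetrised product of the leaves as a form ideal. -/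
def formIdeal : CommTree D → FormIdeal D
  | leaf a => a
  | node t₁ t₂ => FormIdeal.symProd t₁.formIdeal t₂.formIdeal

theorem idl_eq : ∀ t : CommTree D, t.idl = (t.formIdeal.I, t.formIdeal.Gamma)
  | leaf _ => rfl
  | node t₁ t₂ => by
    rw [idl, idl_eq t₁, idl_eq t₂]
    rfl

/-- Some subgroup of `EU(2n, A, Λ)` with image `t.grp n` in `GL(2n, A)` is a group of the level
`t.formIdeal`. -/
def GrpIsLevelGroup (n : ℕ) (t : CommTree D) : Prop :=
  ∃ H, t.grp n = H.map (D.EUmax n).subtype ∧ (D.rootFamily n).IsLevelGroup H t.formIdeal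

theorem grp_node_of_grpIsLevelGroup (hn : 4 ≤ n) {t₁ t₂ : CommTree D}
    (h₁ : t₁.GrpIsLevelGroup n) (h₂ : t₂.GrpIsLevelGroup n) :
    (node t₁ t₂).grp n = Subgroup.map (D.EUmax n).subtype
      ⁅(D.rootFamily n).relElementary t₁.formIdeal,
        (D.rootFamily n).relElementary t₂.formIdeal⁆ := by
  obtain ⟨H₁, hmap₁, hH₁⟩ := h₁
  obtain ⟨H₂, hmap₂, hH₂⟩ := h₂
  rw [grp, hmap₁, hmap₂, ← Subgroup.map_commutator]
  exact congrArg _ ((D.rootGradedGroup hn).commutator_eq_of_isLevelGroup hH₁ hH₂)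

theorem grpIsLevelGroup (hn : 4 ≤ n) : ∀ t : CommTree D, t.GrpIsLevelGroup n
  | leaf a => ⟨_, a.EU_eq_map_relElementary, Or.inl rfl⟩
  | node t₁ t₂ =>
    ⟨_, grp_node_of_grpIsLevelGroup hn (grpIsLevelGroup hn t₁) (grpIsLevelGroup hn t₂),
      Or.inr ⟨_, _, FormIdeal.isProduct_symProd _ _,
        FormIdeal.relElementary_symProd_le_commutator (Nat.le_of_lt hn) _ _, rfl⟩⟩

theorem EU_idl (t : CommTree D) : D.EU n t.idl.1 t.idl.2 =
    ((D.rootFamily n).relElementary t.formIdeal).map (D.EUmax n).subtype := by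
  rw [idl_eq, FormIdeal.EU_eq_map_relElementary]

end CommTree

/-- Theorem 7: for `n ≥ 4` any multiple commutator of relative elementary
subgroups with cut point given by the outermost bracket equals the double
commutator of the elementary subgroups of the correspondingly bracketed
symmetrised products. -/
theorem statement4 {A : Type*} [Ring A] (D : FormRingData A) (n : ℕ) (hn : 4 ≤ n)
    (t₁ t₂ : CommTree D) :
    (CommTree.node t₁ t₂).grp n =
      ⁅D.EU n t₁.idl.1 t₁.idl.2, D.EU n t₂.idl.1 t₂.idl.2⁆ := by
  rw [t₁.EU_idl, t₂.EU_idl, ← Subgroup.map_commutator]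
  exact CommTree.grp_node_of_grpIsLevelGroup hn (t₁.grpIsLevelGroup hn) (t₂.grpIsLevelGroup hn)
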